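/- arXiv:2112.10405 — 2 statements merged into one kernel-verified Lean document; each statement's English description precedes it below -/
import Mathlib

section
/- In the diffusive regime 0 ≤ p < 3/4, the studentized statistic 2√(log n)·(p̂_n − p)/√(3 − 4 p̂_n) converges in distribution to the standard Gaussian N(0,1) as n → ∞ (the quantity 3 − 4 p̂_n is almost surely eventually positive since p̂_n → p < 3/4 almost surely). -/
open MeasureTheory ProbabilityTheory Filter Finset
open scoped BoundedContinuousFunction ENNReal NNReal Topology

noncomputable section

variable {Ω : Type*}

/-- Position of the elephant random walk: `S n = X 1 + ⋯ + X n`. -/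
def erwS (X : ℕ → Ω → ℝ) (n : ℕ) (ω : Ω) : ℝ :=
  ∑ k ∈ Finset.Icc 1 n, X k ω

/-- `V n = 4 ∑_{k=1}^{n-1} (S k / k)²`, the approximate conditional Fisher information. -/
def erwV (X : ℕ → Ω → ℝ) (n : ℕ) (ω : Ω) : ℝ :=
  4 * ∑ k ∈ Finset.Icc 1 (n - 1), (erwS X k ω / k) ^ 2

/-- The quasi-maximum likelihood estimator `p̂ n` of the memory parameter. -/
def erwPhat (X : ℕ → Ω → ℝ) (n : ℕ) (ω : Ω) : ℝ :=
  (∑ k ∈ Finset.Icc 1 (n - 1), (erwS X k ω / k) * (X (k + 1) ω + erwS X k ω / k)) /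
    (2 * ∑ k ∈ Finset.Icc 1 (n - 1), (erwS X k ω / k) ^ 2)

/-- The elephant random walk hypotheses with memory parameter `p ∈ [0,1]`:
the steps take values in `{-1, 1}`, are adapted to the filtration `ℱ`
(which plays the role of `σ(X_1, …, X_n)`), and
`E[X_{n+1} | ℱ_n] = (2p - 1) · S_n / n` almost surely. -/
def IsERW {m0 : MeasurableSpace Ω} (μ : Measure Ω) (ℱ : Filtration ℕ m0)
    (X : ℕ → Ω → ℝ) (p : ℝ) : Prop :=
  0 ≤ p ∧ p ≤ 1 ∧
  (∀ n, 1 ≤ n → ∀ ω, X n ω = 1 ∨ X n ω = -1) ∧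
  (∀ n, 1 ≤ n → Measurable[ℱ n] (X n)) ∧
  (∀ n, 1 ≤ n → μ[X (n + 1) | ℱ n] =ᵐ[μ] fun ω => (2 * p - 1) * (erwS X n ω / n))

set_option linter.unusedSectionVars false

/-! ### Bounded measurable functions -/

/-- `f` is `m`-measurable and bounded. -/
def BM {𝕜 : Type*} [RCLike 𝕜] (m : MeasurableSpace Ω) (f : Ω → 𝕜) : Prop :=
  StronglyMeasurable[m] f ∧ ∃ C : ℝ, ∀ ω, ‖f ω‖ ≤ C

namespace BM

variable {𝕜 : Type*} [RCLike 𝕜] {m m' : MeasurableSpace Ω} {f g : Ω → 𝕜}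

theorem mono (h : BM m f) (hm : m ≤ m') : BM m' f := ⟨h.1.mono hm, h.2⟩

theorem const (c : 𝕜) : BM m (fun _ : Ω => c) :=
  ⟨stronglyMeasurable_const, ‖c‖, fun _ => le_rfl⟩

theorem add (hf : BM m f) (hg : BM m g) : BM m (fun ω => f ω + g ω) := by
  obtain ⟨C, hC⟩ := hf.2
  obtain ⟨D, hD⟩ := hg.2
  exact ⟨hf.1.add hg.1, C + D, fun ω => (norm_add_le _ _).trans (add_le_add (hC ω) (hD ω))⟩

theorem sub (hf : BM m f) (hg : BM m g) : BM m (fun ω => f ω - g ω) := by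
  obtain ⟨C, hC⟩ := hf.2
  obtain ⟨D, hD⟩ := hg.2
  exact ⟨hf.1.sub hg.1, C + D, fun ω => (norm_sub_le _ _).trans (add_le_add (hC ω) (hD ω))⟩

theorem mul (hf : BM m f) (hg : BM m g) : BM m (fun ω => f ω * g ω) := by
  obtain ⟨C, hC⟩ := hf.2
  obtain ⟨D, hD⟩ := hg.2
  refine ⟨hf.1.mul hg.1, C * D, fun ω => ?_⟩
  rw [norm_mul]
  exact mul_le_mul (hC ω) (hD ω) (norm_nonneg _) ((norm_nonneg _).trans (hC ω))

theorem pow (hf : BM m f) (k : ℕ) : BM m (fun ω => f ω ^ k) := by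
  induction k with
  | zero => simpa using const (1 : 𝕜)
  | succ k ih => simpa [pow_succ] using ih.mul hf

theorem cmul (c : 𝕜) (hf : BM m f) : BM m (fun ω => c * f ω) := (const c).mul hf

theorem div (hf : BM m f) (c : 𝕜) : BM m (fun ω => f ω / c) := by
  simpa [div_eq_mul_inv] using hf.mul (const c⁻¹)

theorem sum {ι : Type*} {s : Finset ι} {F : ι → Ω → 𝕜} (h : ∀ i ∈ s, BM m (F i)) :
    BM m (fun ω => ∑ i ∈ s, F i ω) := by
  classical
  induction s using Finset.induction_on with
  | empty => simpa using const (0 : 𝕜)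
  | insert i s hi ih =>
    simp only [Finset.sum_insert hi]
    exact (h i (by simp)).add (ih fun j hj => h j (by simp [hj]))

theorem abs {f : Ω → ℝ} (hf : BM m f) : BM m (fun ω => |f ω|) := by
  obtain ⟨C, hC⟩ := hf.2
  exact ⟨hf.1.norm, C, fun ω => by simpa using hC ω⟩

theorem ofReal {f : Ω → ℝ} (hf : BM m f) : BM m (fun ω => (f ω : ℂ)) := by
  obtain ⟨C, hC⟩ := hf.2
  exact ⟨Complex.continuous_ofReal.comp_stronglyMeasurable hf.1, C, fun ω => by simpa using hC ω⟩

theorem cexp {f : Ω → ℂ} (hf : BM m f) : BM m (fun ω => Complex.exp (f ω)) := by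
  obtain ⟨C, hC⟩ := hf.2
  exact ⟨Complex.continuous_exp.comp_stronglyMeasurable hf.1, Real.exp C, fun ω =>
    (Complex.norm_exp_le_exp_norm _).trans (Real.exp_le_exp.2 (hC ω))⟩

theorem integrable [m0 : MeasurableSpace Ω] {μ : Measure Ω} [IsFiniteMeasure μ]
    (hf : BM m f) (hm : m ≤ m0) : Integrable f μ := by
  obtain ⟨C, hC⟩ := hf.2
  exact Integrable.of_bound (hf.1.mono hm).aestronglyMeasurable C (ae_of_all _ hC)

end BM

section ERW

variable {m0 : MeasurableSpace Ω} {μ : Measure Ω} [IsProbabilityMeasure μ]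
    {ℱ : Filtration ℕ m0} {X : ℕ → Ω → ℝ} {p : ℝ}

theorem IsERW.bmX (h : IsERW μ ℱ X p) {n : ℕ} (hn : 1 ≤ n) : BM (ℱ n) (X n) :=
  ⟨(h.2.2.2.1 n hn).stronglyMeasurable, 1, fun ω => by
    rcases h.2.2.1 n hn ω with e | e <;> simp [e]⟩

theorem IsERW.sqX (h : IsERW μ ℱ X p) {n : ℕ} (hn : 1 ≤ n) (ω : Ω) : X n ω ^ 2 = 1 := by
  rcases h.2.2.1 n hn ω with e | e <;> simp [e]

theorem IsERW.bmS (h : IsERW μ ℱ X p) (n : ℕ) : BM (ℱ n) (erwS X n) := by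
  unfold erwS
  refine BM.sum fun k hk => (h.bmX (Finset.mem_Icc.1 hk).1).mono (ℱ.mono (Finset.mem_Icc.1 hk).2)

theorem IsERW.bmT (h : IsERW μ ℱ X p) (n : ℕ) : BM (ℱ n) (fun ω => erwS X n ω / n) :=
  (h.bmS n).div _

theorem IsERW.abs_S_le (h : IsERW μ ℱ X p) (n : ℕ) (ω : Ω) : |erwS X n ω| ≤ n := by
  unfold erwS
  refine (Finset.abs_sum_le_sum_abs _ _).trans ?_
  refine (Finset.sum_le_card_nsmul _ _ 1 fun k hk => ?_).trans (by simp)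
  rcases h.2.2.1 k (Finset.mem_Icc.1 hk).1 ω with e | e <;> simp [e]

theorem IsERW.abs_T_le (h : IsERW μ ℱ X p) (n : ℕ) (ω : Ω) : |erwS X n ω / n| ≤ 1 := by
  rw [abs_div, Nat.abs_cast]
  exact div_le_one_of_le₀ (h.abs_S_le n ω) (by positivity)

theorem IsERW.abs_a_le (h : IsERW μ ℱ X p) : |2 * p - 1| ≤ 1 := by
  rw [abs_le]; constructor <;> linarith [h.1, h.2.1]

theorem erwS_succ (n : ℕ) (ω : Ω) : erwS X (n + 1) ω = erwS X n ω + X (n + 1) ω := by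
  unfold erwS
  rw [Finset.sum_Icc_succ_top (by omega)]

/-- The key identity. -/
theorem IsERW.integral_mul_X (h : IsERW μ ℱ X p) {𝕜 : Type*} [RCLike 𝕜] {n : ℕ} (hn : 1 ≤ n)
    {g : Ω → 𝕜} (hg : BM (ℱ n) g) :
    ∫ ω, X (n + 1) ω • g ω ∂μ = ∫ ω, ((2 * p - 1) * (erwS X n ω / n)) • g ω ∂μ := by
  obtain ⟨C, hC⟩ := hg.2
  have key := condExp_stronglyMeasurable_bilin_of_bound (μ := μ)
    (ContinuousLinearMap.lsmul ℝ ℝ (E := 𝕜)).flip (ℱ.le n) hg.1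
    ((h.bmX (n := n + 1) (by omega)).integrable (ℱ.le _)) C (ae_of_all _ hC)
  simp only [ContinuousLinearMap.flip_apply, ContinuousLinearMap.lsmul_apply] at key
  rw [← integral_condExp (ℱ.le n)]
  refine integral_congr_ae ?_
  filter_upwards [key, h.2.2.2.2 n hn] with ω h1 h2
  rw [h1, h2]

theorem IsERW.integral_mul_X' (h : IsERW μ ℱ X p) {n : ℕ} (hn : 1 ≤ n)
    {g : Ω → ℝ} (hg : BM (ℱ n) g) :
    ∫ ω, g ω * X (n + 1) ω ∂μ = (2 * p - 1) * ∫ ω, g ω * (erwS X n ω / n) ∂μ := by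
  have := h.integral_mul_X hn hg
  simp only [smul_eq_mul] at this
  rw [← integral_const_mul]
  refine Eq.trans ?_ (this.trans ?_) <;> refine integral_congr_ae (ae_of_all _ fun ω => ?_)
  · exact mul_comm _ _
  · simp only; ring

/-- second moment recursion -/
theorem IsERW.second_rec (h : IsERW μ ℱ X p) {n : ℕ} (hn : 1 ≤ n) :
    ∫ ω, erwS X (n + 1) ω ^ 2 ∂μ
      = (1 + 2 * (2 * p - 1) / n) * ∫ ω, erwS X n ω ^ 2 ∂μ + 1 := by
  have hle := ℱ.le n
  have hle' := ℱ.le (n + 1)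
  have hS := h.bmS n
  have hX := h.bmX (n := n + 1) (by omega)
  have hS' := hS.mono (ℱ.mono (Nat.le_succ n))
  have e1 : ∀ ω, erwS X (n + 1) ω ^ 2 = erwS X n ω ^ 2 + (2 * erwS X n ω) * X (n + 1) ω + 1 := by
    intro ω
    rw [erwS_succ, add_sq, h.sqX (by omega)]
  simp_rw [e1]
  rw [integral_add, integral_add, h.integral_mul_X' hn (hS.cmul 2)]
  · have : ∀ ω, 2 * erwS X n ω * (erwS X n ω / n) = (2 / n) * erwS X n ω ^ 2 := by
      intro ω; ring
    simp_rw [this, integral_const_mul]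
    simp
    ring
  · exact (hS.pow 2).integrable hle
  · exact ((hS'.cmul 2).mul hX).integrable hle'
  · exact ((hS'.pow 2).add ((hS'.cmul 2).mul hX)).integrable hle'
  · exact (BM.const (m := ℱ n) (1 : ℝ)).integrable hle

/-- fourth moment recursion -/
theorem IsERW.fourth_rec (h : IsERW μ ℱ X p) {n : ℕ} (hn : 1 ≤ n) :
    ∫ ω, erwS X (n + 1) ω ^ 4 ∂μ
      = (1 + 4 * (2 * p - 1) / n) * ∫ ω, erwS X n ω ^ 4 ∂μ
        + (6 + 4 * (2 * p - 1) / n) * ∫ ω, erwS X n ω ^ 2 ∂μ + 1 := by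
  have hle := ℱ.le n
  have hle' := ℱ.le (n + 1)
  have hS := h.bmS n
  have hX := h.bmX (n := n + 1) (by omega)
  have hS' := hS.mono (ℱ.mono (Nat.le_succ n))
  have e1 : ∀ ω, erwS X (n + 1) ω ^ 4 = (erwS X n ω ^ 4 + 6 * erwS X n ω ^ 2)
      + (4 * erwS X n ω ^ 3 + 4 * erwS X n ω) * X (n + 1) ω + 1 := by
    intro ω
    have := h.sqX (n := n + 1) (by omega) ω
    rw [erwS_succ]
    linear_combination (6 * erwS X n ω ^ 2 + 4 * erwS X n ω * X (n + 1) ω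
      + X (n + 1) ω ^ 2 + 1) * this
  simp_rw [e1]
  have b1 := (hS.pow 3).cmul 4
  have b2 := hS.cmul 4
  have b3 := hS.pow 4
  have b4 := (hS.pow 2).cmul 6
  have hb := ((b1.add b2).mono (ℱ.mono (Nat.le_succ n))).mul hX
  rw [integral_add, integral_add, h.integral_mul_X' hn (b1.add b2), integral_add]
  · have : ∀ ω, (4 * erwS X n ω ^ 3 + 4 * erwS X n ω) * (erwS X n ω / n)
        = (4 / n) * erwS X n ω ^ 4 + (4 / n) * erwS X n ω ^ 2 := by
      intro ω; ring
    simp_rw [this]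
    rw [integral_add (((hS.pow 4).cmul _).integrable hle) (((hS.pow 2).cmul _).integrable hle)]
    simp_rw [integral_const_mul]
    simp
    ring
  · exact b3.integrable hle
  · exact b4.integrable hle
  · exact (b3.add b4).integrable hle
  · exact hb.integrable hle'
  · exact ((b3.add b4).integrable hle).add (hb.integrable hle')
  · exact (BM.const (m := ℱ n) (1 : ℝ)).integrable hle

theorem IsERW.S_one_sq (h : IsERW μ ℱ X p) (ω : Ω) : erwS X 1 ω ^ 2 = 1 := by
  simp [erwS, h.sqX le_rfl]

theorem IsERW.moments (h : IsERW μ ℱ X p) (hp : p < 3 / 4) :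
    ∃ C : ℝ, 1 ≤ C ∧ ∀ n : ℕ, 1 ≤ n → ∫ ω, erwS X n ω ^ 2 ∂μ ≤ C * n ∧
      ∫ ω, erwS X n ω ^ 4 ∂μ ≤ C * n ^ 2 := by
  obtain ⟨b, hb0, hb, hab⟩ : ∃ b : ℝ, 0 ≤ b ∧ b < 1 / 2 ∧ 2 * p - 1 ≤ b :=
    ⟨max (2 * p - 1) 0, le_max_right _ _, max_lt (by linarith) (by norm_num), le_max_left _ _⟩
  obtain ⟨C, hC1, hC⟩ : ∃ C : ℝ, 1 ≤ C ∧ 1 + 2 * b * C ≤ C := by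
    refine ⟨1 / (1 - 2 * b), ?_, ?_⟩
    · rw [le_div_iff₀] <;> linarith
    · have : 1 - 2 * b ≠ 0 := by linarith
      apply le_of_eq
      field_simp
      ring
  have h2 : ∀ n : ℕ, 1 ≤ n → ∫ ω, erwS X n ω ^ 2 ∂μ ≤ C * n := by
    intro n hn
    induction n, hn using Nat.le_induction with
    | base => simp [h.S_one_sq, hC1]
    | succ n hn ih =>
      rw [h.second_rec hn]
      have hn' : (0 : ℝ) < n := by exact_mod_cast hn
      have hnn : 0 ≤ ∫ ω, erwS X n ω ^ 2 ∂μ := integral_nonneg fun ω => sq_nonneg _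
      calc _ ≤ (1 + 2 * b / n) * ∫ ω, erwS X n ω ^ 2 ∂μ + 1 := by gcongr
        _ ≤ (1 + 2 * b / n) * (C * n) + 1 := by gcongr
        _ = C * n + (2 * b * C + 1) := by field_simp; ring
        _ ≤ C * (n + 1 : ℕ) := by push_cast; linarith
  have h4 : ∀ n : ℕ, 1 ≤ n → ∫ ω, erwS X n ω ^ 4 ∂μ ≤ (11 * C ^ 2) * n ^ 2 := by
    intro n hn
    induction n, hn using Nat.le_induction with
    | base =>
      have : ∀ ω, erwS X 1 ω ^ 4 = 1 := fun ω => by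
        rw [show (4 : ℕ) = 2 * 2 from rfl, pow_mul, h.S_one_sq, one_pow]
      simp [this]
      nlinarith
    | succ n hn ih =>
      rw [h.fourth_rec hn]
      have hn' : (1 : ℝ) ≤ n := by exact_mod_cast hn
      have hn0 : (0 : ℝ) < n := by linarith
      have hnn : 0 ≤ ∫ ω, erwS X n ω ^ 2 ∂μ := integral_nonneg fun ω => sq_nonneg _
      have hnn4 : 0 ≤ ∫ ω, erwS X n ω ^ 4 ∂μ := integral_nonneg fun ω => by positivity
      have hb10 : 6 + 4 * (2 * p - 1) / n ≤ 10 := by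
        have : 4 * (2 * p - 1) / n ≤ 4 := by
          rw [div_le_iff₀ hn0]; nlinarith [h.2.1]
        linarith
      calc _ ≤ (1 + 4 * b / n) * ∫ ω, erwS X n ω ^ 4 ∂μ + 10 * ∫ ω, erwS X n ω ^ 2 ∂μ + 1 := by
            gcongr
        _ ≤ (1 + 4 * b / n) * ((11 * C ^ 2) * n ^ 2) + 10 * (C * n) + 1 := by
            gcongr
            exact h2 n hn
        _ = 11 * C ^ 2 * n ^ 2 + (44 * C) * (b * C) * n + 10 * C * n + 1 := by
            field_simp
            ring
        _ ≤ 11 * C ^ 2 * n ^ 2 + (44 * C) * ((C - 1) / 2) * n + 10 * C * n + C * n := by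
            gcongr
            · linarith
            · nlinarith
        _ ≤ (11 * C ^ 2) * ((n + 1 : ℕ) : ℝ) ^ 2 := by push_cast; nlinarith
  refine ⟨11 * C ^ 2, by nlinarith, fun n hn => ⟨(h2 n hn).trans ?_, h4 n hn⟩⟩
  gcongr
  nlinarith

/-- The martingale transform. -/
def erwD (X : ℕ → Ω → ℝ) (p : ℝ) (w : ℕ → Ω → ℝ) (m : ℕ) (ω : Ω) : ℝ :=
  ∑ k ∈ Finset.Icc 1 m, w k ω * (X (k + 1) ω - (2 * p - 1) * (erwS X k ω / k))

theorem erwD_succ (w : ℕ → Ω → ℝ) (m : ℕ) (ω : Ω) :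
    erwD X p w (m + 1) ω = erwD X p w m ω + w (m + 1) ω *
      (X (m + 1 + 1) ω - (2 * p - 1) * (erwS X (m + 1) ω / (m + 1 : ℕ))) := by
  unfold erwD
  rw [Finset.sum_Icc_succ_top (by omega)]

theorem IsERW.bmD (h : IsERW μ ℱ X p) {w : ℕ → Ω → ℝ} (hw : ∀ k, BM (ℱ k) (w k)) (m : ℕ) :
    BM (ℱ (m + 1)) (erwD X p w m) := by
  unfold erwD
  refine BM.sum fun k hk => ?_
  have := (Finset.mem_Icc.1 hk).2
  exact ((hw k).mono (ℱ.mono (by omega))).mul (((h.bmX (by omega)).mono (ℱ.mono (by omega))).sub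
    (((h.bmT k).cmul _).mono (ℱ.mono (by omega))))

theorem IsERW.D_sq (h : IsERW μ ℱ X p) {w : ℕ → Ω → ℝ} (hw : ∀ k, BM (ℱ k) (w k)) (m : ℕ) :
    ∫ ω, erwD X p w m ω ^ 2 ∂μ ≤ ∑ k ∈ Finset.Icc 1 m, ∫ ω, w k ω ^ 2 ∂μ := by
  induction m with
  | zero => simp [erwD]
  | succ m ih =>
    rw [Finset.sum_Icc_succ_top (by omega)]
    refine le_trans ?_ (add_le_add_left ih _)
    have hle := ℱ.le (m + 1)
    have hle' := ℱ.le (m + 1 + 1)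
    have hmono := ℱ.mono (Nat.le_succ (m + 1))
    have hD := h.bmD hw m
    have hW := hw (m + 1)
    have hT := (h.bmT (m + 1)).cmul (2 * p - 1)
    have hX := h.bmX (n := m + 1 + 1) (by omega)
    have e1 : ∀ ω, erwD X p w (m + 1) ω ^ 2
        = (2 * erwD X p w m ω * w (m + 1) ω
            - 2 * w (m + 1) ω ^ 2 * ((2 * p - 1) * (erwS X (m + 1) ω / (m + 1 : ℕ))))
            * X (m + 1 + 1) ω
          + (erwD X p w m ω ^ 2 + w (m + 1) ω ^ 2
            - 2 * erwD X p w m ω * w (m + 1) ω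
              * ((2 * p - 1) * (erwS X (m + 1) ω / (m + 1 : ℕ)))
            + w (m + 1) ω ^ 2 * ((2 * p - 1) * (erwS X (m + 1) ω / (m + 1 : ℕ))) ^ 2) := by
      intro ω
      have := h.sqX (n := m + 1 + 1) (by omega) ω
      rw [erwD_succ]
      linear_combination (w (m + 1) ω ^ 2) * this
    simp_rw [e1]
    have b1 := ((hD.cmul 2).mul hW).sub (((hW.pow 2).cmul 2).mul hT)
    have b2 := (((hD.pow 2).add (hW.pow 2)).sub (((hD.cmul 2).mul hW).mul hT)).add
      ((hW.pow 2).mul (hT.pow 2))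
    rw [integral_add (((b1.mono hmono).mul hX).integrable hle') (b2.integrable hle),
      h.integral_mul_X' (by omega) b1, ← integral_const_mul,
      ← integral_add ((b1.mul (h.bmT (m + 1))).cmul _ |>.integrable hle) (b2.integrable hle),
      ← integral_add ((hD.pow 2).integrable hle) ((hW.pow 2).integrable hle)]
    refine integral_mono ?_ (((hD.pow 2).add (hW.pow 2)).integrable hle) fun ω => ?_
    · exact (((b1.mul (h.bmT (m + 1))).cmul _).add b2).integrable hle
    · have : 0 ≤ w (m + 1) ω ^ 2 * ((2 * p - 1) * (erwS X (m + 1) ω / (m + 1 : ℕ))) ^ 2 := by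
        positivity
      simp only
      nlinarith

/-! ### Asymptotics of the information -/

/-- `A m = ∑_{k ≤ m} (S k / k)²`. -/
def erwA (X : ℕ → Ω → ℝ) (m : ℕ) (ω : Ω) : ℝ :=
  ∑ k ∈ Finset.Icc 1 m, (erwS X k ω / k) ^ 2

theorem sum_inv_mul (m : ℕ) :
    ∑ k ∈ Finset.Icc 1 m, (1 : ℝ) / (k * (k + 1)) = 1 - 1 / (m + 1) := by
  induction m with
  | zero => simp
  | succ m ih =>
    rw [Finset.sum_Icc_succ_top (by omega), ih]
    push_cast
    field_simp
    ring

theorem IsERW.A_identity (h : IsERW μ ℱ X p) (m : ℕ) (ω : Ω) :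
    (3 - 4 * p) * ∑ k ∈ Finset.Icc 1 m, erwS X k ω ^ 2 / (k * (k + 1))
      = (∑ k ∈ Finset.Icc 1 (m + 1), (1 : ℝ) / k) - erwS X (m + 1) ω ^ 2 / (m + 1)
        + 2 * erwD X p (fun k ω => erwS X k ω / (k + 1)) m ω := by
  induction m with
  | zero => simp [erwD, h.S_one_sq]
  | succ m ih =>
    rw [Finset.sum_Icc_succ_top (by omega), mul_add, ih,
      Finset.sum_Icc_succ_top (b := m + 1) (by omega), erwD_succ, erwS_succ (m + 1)]
    have h2 := h.sqX (n := m + 1 + 1) (by omega) ω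
    have : X (m + 1 + 1) ω ^ 2 = 1 := h2
    push_cast
    field_simp
    linear_combination (m + 1 : ℝ) * this

theorem IsERW.bmA (h : IsERW μ ℱ X p) (m : ℕ) : BM (ℱ m) (erwA X m) := by
  unfold erwA
  exact BM.sum fun k hk => ((h.bmT k).mono (ℱ.mono (Finset.mem_Icc.1 hk).2)).pow 2

theorem IsERW.integral_abs_le (h : IsERW μ ℱ X p) {w : ℕ → Ω → ℝ} (hw : ∀ k, BM (ℱ k) (w k))
    (m : ℕ) {r B : ℝ} (hr : 0 < r) (hB : ∑ k ∈ Finset.Icc 1 m, ∫ ω, w k ω ^ 2 ∂μ ≤ B * r ^ 2) :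
    ∫ ω, |erwD X p w m ω| ∂μ ≤ (1 + B) * r := by
  have hD := h.bmD hw m
  have hle := ℱ.le (m + 1)
  calc ∫ ω, |erwD X p w m ω| ∂μ ≤ ∫ ω, (r + (1 / r) * erwD X p w m ω ^ 2) ∂μ := by
        refine integral_mono (hD.abs.integrable hle)
          (((BM.const r).add ((hD.pow 2).cmul _)).integrable hle) fun ω => ?_
        simp only
        have h1 : r * |erwD X p w m ω| ≤ r * (r + (1 / r) * erwD X p w m ω ^ 2) := by
          rw [mul_add, ← mul_assoc, mul_one_div_cancel hr.ne', one_mul, ← sq_abs (erwD X p w m ω)]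
          nlinarith [sq_nonneg (r - |erwD X p w m ω|), sq_nonneg (|erwD X p w m ω|), sq_nonneg r]
        exact le_of_mul_le_mul_left h1 hr
    _ = r + (1 / r) * ∫ ω, erwD X p w m ω ^ 2 ∂μ := by
        rw [integral_add ((BM.const (m := ℱ 0) r).integrable (ℱ.le 0))
          (((hD.pow 2).cmul _).integrable hle), integral_const_mul]
        simp
    _ ≤ r + (1 / r) * (B * r ^ 2) := by
        gcongr
        exact (h.D_sq hw m).trans hB
    _ = (1 + B) * r := by field_simp

theorem sum_log_bounds (m : ℕ) :
    Real.log (m + 1) ≤ ∑ k ∈ Finset.Icc 1 (m + 1), (1 : ℝ) / k ∧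
    ∑ k ∈ Finset.Icc 1 (m + 1), (1 : ℝ) / k ≤ 1 + Real.log (m + 1) := by
  have e : ((harmonic (m + 1) : ℚ) : ℝ) = ∑ k ∈ Finset.Icc 1 (m + 1), (1 : ℝ) / k := by
    rw [harmonic_eq_sum_Icc]
    push_cast
    simp
  rw [← e]
  have h1 := log_add_one_le_harmonic (m + 1)
  have h2 := harmonic_le_one_add_log (m + 1)
  push_cast at h1 h2
  refine ⟨le_trans (Real.log_le_log (by positivity) (by linarith)) h1, h2⟩

/-- All the moment information used later. -/
theorem IsERW.A_L1 (h : IsERW μ ℱ X p) (hp : p < 3 / 4) :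
    ∃ C : ℝ, 0 ≤ C ∧ ∀ m : ℕ,
      ∫ ω, |(3 - 4 * p) * erwA X m ω - Real.log (m + 1)| ∂μ
        ≤ C * Real.sqrt (1 + Real.log (m + 1)) ∧
      ∫ ω, |erwD X p (fun k ω => erwS X k ω / k) m ω| ∂μ
        ≤ C * Real.sqrt (1 + Real.log (m + 1)) ∧
      ∫ ω, ∑ k ∈ Finset.Icc 1 m, (erwS X k ω / k) ^ 4 ∂μ ≤ C := by
  obtain ⟨C, hC1, hC⟩ := h.moments hp
  have hC0 : 0 ≤ C := by linarith
  have ha : 0 < 3 - 4 * p := by linarith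
  refine ⟨(3 - 4 * p) * C + 1 + C + 2 * (1 + C) + 2 * C, by positivity, fun m => ?_⟩
  set r := Real.sqrt (1 + Real.log (m + 1)) with hr
  have hlog : 0 ≤ Real.log (m + 1) := Real.log_nonneg (by linarith [(Nat.cast_nonneg m : (0:ℝ) ≤ m)])
  have hr1 : 1 ≤ r := by rw [hr, Real.one_le_sqrt]; linarith
  have hr2 : r ^ 2 = 1 + Real.log (m + 1) := Real.sq_sqrt (by linarith)
  have hH := sum_log_bounds m
  have hHm : ∑ k ∈ Finset.Icc 1 m, (1 : ℝ) / k ≤ r ^ 2 := by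
    rw [hr2]
    refine le_trans ?_ hH.2
    rw [Finset.sum_Icc_succ_top (by omega)]
    have : (0 : ℝ) ≤ 1 / (m + 1 : ℕ) := by positivity
    linarith
  have hle := ℱ.le (m + 1)
  -- the martingale with weights `S k / (k + 1)`
  have hw1 : ∀ k, BM (ℱ k) (fun ω => erwS X k ω / ((k : ℝ) + 1)) := fun k => (h.bmS k).div _
  have hT2 : ∀ k ∈ Finset.Icc 1 m, ∫ ω, (erwS X k ω / k) ^ 2 ∂μ ≤ C * (1 / k) := by
    intro k hk
    have hk1 := (Finset.mem_Icc.1 hk).1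
    have hk' : (0 : ℝ) < k := by exact_mod_cast hk1
    simp_rw [div_pow]
    rw [integral_div, div_le_iff₀ (by positivity)]
    refine ((hC k hk1).1).trans (le_of_eq ?_)
    field_simp
  have hN1 : ∫ ω, |erwD X p (fun k ω => erwS X k ω / (k + 1)) m ω| ∂μ ≤ (1 + C) * r := by
    refine h.integral_abs_le hw1 m (by linarith) ?_
    refine le_trans (Finset.sum_le_sum (g := fun k : ℕ => C * ((1 : ℝ) / k)) fun k hk => ?_) ?_
    · refine le_trans ?_ (hT2 k hk)
      refine integral_mono (((hw1 k).pow 2).integrable (ℱ.le k))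
        (((h.bmT k).pow 2).integrable (ℱ.le k)) fun ω => ?_
      simp only [div_pow]
      have hk' : (0 : ℝ) < k := by exact_mod_cast (Finset.mem_Icc.1 hk).1
      gcongr
      linarith
    · rw [← Finset.mul_sum]; gcongr
  have hN2 : ∫ ω, |erwD X p (fun k ω => erwS X k ω / k) m ω| ∂μ ≤ (1 + C) * r := by
    refine h.integral_abs_le (fun k => h.bmT k) m (by linarith) ?_
    refine le_trans (Finset.sum_le_sum (g := fun k : ℕ => C * ((1 : ℝ) / k)) hT2) ?_
    rw [← Finset.mul_sum]; gcongr
  have bQ : ∀ k ∈ Finset.Icc 1 m, BM (ℱ (m + 1)) (fun ω => erwS X k ω ^ 2 / (k ^ 2 * (k + 1))) :=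
    fun k hk => (((h.bmS k).mono (ℱ.mono (by have := (Finset.mem_Icc.1 hk).2; omega))).pow 2).div _
  have hQ : ∫ ω, ∑ k ∈ Finset.Icc 1 m, erwS X k ω ^ 2 / (k ^ 2 * (k + 1)) ∂μ ≤ C := by
    rw [integral_finsetSum _ fun k hk => (bQ k hk).integrable hle]
    refine le_trans (Finset.sum_le_sum (g := fun k : ℕ => C * ((1 : ℝ) / (k * (k + 1))))
      fun k hk => ?_) ?_
    · have hk1 := (Finset.mem_Icc.1 hk).1
      have hk' : (0 : ℝ) < k := by exact_mod_cast hk1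
      rw [integral_div, div_le_iff₀ (by positivity)]
      refine ((hC k hk1).1).trans (le_of_eq ?_)
      field_simp
    · rw [← Finset.mul_sum, sum_inv_mul]
      have : (0 : ℝ) ≤ 1 / (m + 1) := by positivity
      nlinarith
  have bS := (h.bmS (m + 1))
  have hS : ∫ ω, erwS X (m + 1) ω ^ 2 / (m + 1) ∂μ ≤ C := by
    rw [integral_div, div_le_iff₀ (by positivity)]
    simpa using (hC (m + 1) (by omega)).1
  refine ⟨?_, hN2.trans ?_, ?_⟩
  · have hpt : ∀ ω, |(3 - 4 * p) * erwA X m ω - Real.log (m + 1)| ≤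
        ((3 - 4 * p) * ∑ k ∈ Finset.Icc 1 m, erwS X k ω ^ 2 / (k ^ 2 * (k + 1)) + 1)
        + (erwS X (m + 1) ω ^ 2 / (m + 1)
          + 2 * |erwD X p (fun k ω => erwS X k ω / (k + 1)) m ω|) := by
      intro ω
      have e1 : erwA X m ω = ∑ k ∈ Finset.Icc 1 m, erwS X k ω ^ 2 / (k * (k + 1))
          + ∑ k ∈ Finset.Icc 1 m, erwS X k ω ^ 2 / (k ^ 2 * (k + 1)) := by
        unfold erwA
        rw [← Finset.sum_add_distrib]
        refine Finset.sum_congr rfl fun k hk => ?_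
        have hk' : (0 : ℝ) < k := by exact_mod_cast (Finset.mem_Icc.1 hk).1
        field_simp
      have q0 : 0 ≤ ∑ k ∈ Finset.Icc 1 m, erwS X k ω ^ 2 / ((k : ℝ) ^ 2 * (k + 1)) :=
        Finset.sum_nonneg fun k _ => by positivity
      have q1 := mul_nonneg ha.le q0
      have q2 : 0 ≤ erwS X (m + 1) ω ^ 2 / ((m : ℝ) + 1) := by positivity
      rw [e1, mul_add, h.A_identity m ω]
      have q3 := le_abs_self (erwD X p (fun k ω => erwS X k ω / (k + 1)) m ω)
      have q4 := neg_abs_le (erwD X p (fun k ω => erwS X k ω / (k + 1)) m ω)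
      rw [abs_le]
      constructor <;> linarith [hH.1, hH.2]
    have bD := h.bmD hw1 m
    have i1 : Integrable (fun ω => (3 - 4 * p) *
        ∑ k ∈ Finset.Icc 1 m, erwS X k ω ^ 2 / ((k : ℝ) ^ 2 * (k + 1)) + 1) μ :=
      (((BM.sum bQ).cmul _).add (BM.const 1)).integrable hle
    have i2 : Integrable (fun ω => erwS X (m + 1) ω ^ 2 / ((m : ℝ) + 1)
          + 2 * |erwD X p (fun k ω => erwS X k ω / (k + 1)) m ω|) μ :=
      (((bS.pow 2).div _).add (bD.abs.cmul 2)).integrable hle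
    refine (integral_mono ?_ (i1.add i2) hpt).trans ?_
    · exact ((((h.bmA m).cmul _).sub (BM.const _)).abs).integrable (ℱ.le m)
    rw [integral_add' i1 i2, integral_add (((BM.sum bQ).cmul _).integrable hle)
      ((BM.const (m := ℱ 0) (1 : ℝ)).integrable (ℱ.le 0)),
      integral_add (((bS.pow 2).div _).integrable hle) ((bD.abs.cmul 2).integrable hle),
      integral_const_mul, integral_const_mul]
    have := mul_le_mul_of_nonneg_left hQ ha.le
    have h5 : (3 - 4 * p) * C + 1 + C + 2 * C ≤ ((3 - 4 * p) * C + 1 + C + 2 * C) * r :=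
      le_mul_of_one_le_right (by positivity) hr1
    simp only [integral_const, probReal_univ, smul_eq_mul, mul_one]
    nlinarith
  · have : 0 ≤ (3 - 4 * p) * C := by positivity
    exact mul_le_mul_of_nonneg_right (by linarith) (by linarith)
  · rw [integral_finsetSum _ fun k _ => ((h.bmT k).pow 4).integrable (ℱ.le k)]
    refine le_trans (Finset.sum_le_sum (g := fun k : ℕ => (2 * C) * ((1 : ℝ) / (k * (k + 1))))
      fun k hk => ?_) ?_
    · have hk1 := (Finset.mem_Icc.1 hk).1
      have hk' : (1 : ℝ) ≤ k := by exact_mod_cast hk1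
      simp_rw [div_pow]
      rw [integral_div, div_le_iff₀ (by positivity)]
      refine ((hC k hk1).2).trans ?_
      rw [mul_one_div, div_mul_eq_mul_div, le_div_iff₀ (by positivity)]
      have : 0 ≤ C * (k : ℝ) ^ 3 := by positivity
      nlinarith
    · rw [← Finset.mul_sum, sum_inv_mul]
      have : (0 : ℝ) ≤ 1 / (m + 1) := by positivity
      have : 0 ≤ (3 - 4 * p) * C := by positivity
      nlinarith

/-! ### Characteristic functions -/

theorem step_bound (u s : ℝ) (hu : |u| ≤ 1 / 2) (hs : |s| ≤ 1) :
    ‖Complex.exp ((u ^ 2 * (1 - s ^ 2) / 2 : ℝ)) * Complex.exp (-(Complex.I * (u * s : ℝ)))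
      * (Complex.cos u + Complex.I * s * Complex.sin u) - 1‖ ≤ 5 * |u| ^ 3 := by
  obtain ⟨hs1, hs2⟩ := abs_le.1 hs
  have hu0 := abs_nonneg u
  have taylor : ∀ x : ℂ, ‖x‖ ≤ 2 * |u| →
      ‖Complex.exp x - (1 + x + x ^ 2 / 2)‖ ≤ 2 * |u| ^ 3 := by
    intro x hx
    have h1 := Complex.exp_bound (x := x) (by linarith) (n := 3) (by norm_num)
    have e : ∑ m ∈ range 3, x ^ m / (m.factorial : ℂ) = 1 + x + x ^ 2 / 2 := by
      simp [Finset.sum_range_succ, Nat.factorial]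
    rw [e] at h1
    refine h1.trans ?_
    have : ‖x‖ ^ 3 ≤ (2 * |u|) ^ 3 := by gcongr
    have hc : (((Nat.succ 3 : ℕ) : ℝ) * ((Nat.factorial 3 : ℕ) * (3 : ℕ) : ℝ)⁻¹) = 2 / 9 := by
      norm_num [Nat.factorial]
    rw [hc]
    nlinarith [pow_nonneg hu0 3]
  set x : ℂ := Complex.I * (u * (1 - s) : ℝ) with hx
  set y : ℂ := -(Complex.I * (u * (1 + s) : ℝ)) with hy
  have nx : ‖x‖ ≤ 2 * |u| := by
    rw [hx, norm_mul, Complex.norm_I, one_mul, Complex.norm_real, Real.norm_eq_abs, abs_mul,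
      abs_of_nonneg (by linarith : 0 ≤ 1 - s)]
    nlinarith
  have ny : ‖y‖ ≤ 2 * |u| := by
    rw [hy, norm_neg, norm_mul, Complex.norm_I, one_mul, Complex.norm_real, Real.norm_eq_abs,
      abs_mul, abs_of_nonneg (by linarith : 0 ≤ 1 + s)]
    nlinarith
  set v : ℝ := u ^ 2 * (1 - s ^ 2) / 2 with hv
  have hs2' : s ^ 2 ≤ 1 := by nlinarith
  have hv0 : 0 ≤ v := by rw [hv]; have : 0 ≤ 1 - s ^ 2 := by linarith
                         positivity
  have hvu : v ≤ |u| ^ 2 / 2 := by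
    rw [hv, sq_abs]
    nlinarith [sq_nonneg u, sq_nonneg s, mul_nonneg (sq_nonneg u) (sq_nonneg s)]
  have hv8 : v ≤ 1 / 8 := by nlinarith
  set R : ℂ := (1 + s) / 2 * (Complex.exp x - (1 + x + x ^ 2 / 2))
    + (1 - s) / 2 * (Complex.exp y - (1 + y + y ^ 2 / 2)) with hR
  have main : Complex.exp (-(Complex.I * (u * s : ℝ)))
      * (Complex.cos u + Complex.I * s * Complex.sin u) = 1 - v + R := by
    have ex : Complex.exp x = Complex.exp (-(Complex.I * (u * s : ℝ))) *
        (Complex.cos u + Complex.sin u * Complex.I) := by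
      rw [← Complex.exp_mul_I, ← Complex.exp_add]
      congr 1
      rw [hx]; push_cast; ring
    have ey : Complex.exp y = Complex.exp (-(Complex.I * (u * s : ℝ))) *
        (Complex.cos u - Complex.sin u * Complex.I) := by
      have : Complex.cos u - Complex.sin u * Complex.I = Complex.exp (-u * Complex.I) := by
        rw [Complex.exp_mul_I, Complex.cos_neg, Complex.sin_neg]; ring
      rw [this, ← Complex.exp_add]
      congr 1
      rw [hy]; push_cast; ring
    rw [hR, ex, ey, hx, hy, hv]
    push_cast
    linear_combination (u ^ 2 * (1 - s ^ 2) / 2 : ℂ) * Complex.I_sq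
  have nR : ‖R‖ ≤ 2 * |u| ^ 3 := by
    have n1 : ‖((1 + s) / 2 : ℂ)‖ = (1 + s) / 2 := by
      rw [show ((1 + s) / 2 : ℂ) = (((1 + s) / 2 : ℝ) : ℂ) by push_cast; rfl, Complex.norm_real,
        Real.norm_of_nonneg (by linarith)]
    have n2 : ‖((1 - s) / 2 : ℂ)‖ = (1 - s) / 2 := by
      rw [show ((1 - s) / 2 : ℂ) = (((1 - s) / 2 : ℝ) : ℂ) by push_cast; rfl, Complex.norm_real,
        Real.norm_of_nonneg (by linarith)]
    rw [hR]
    refine (norm_add_le _ _).trans ?_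
    rw [norm_mul, norm_mul, n1, n2]
    have a1 := mul_le_mul_of_nonneg_left (taylor x nx) (by linarith : 0 ≤ (1 + s) / 2)
    have a2 := mul_le_mul_of_nonneg_left (taylor y ny) (by linarith : 0 ≤ (1 - s) / 2)
    linarith
  have hev : |Real.exp v - 1 - v| ≤ v ^ 2 := by
    have := Real.norm_exp_sub_one_sub_id_le (x := v) (by rw [Real.norm_of_nonneg hv0]; linarith)
    simpa using this
  rw [mul_assoc, main]
  have e2 : Complex.exp (v : ℂ) * (1 - v + R) - 1
      = ((Real.exp v * (1 - v) - 1 : ℝ) : ℂ) + (Real.exp v : ℂ) * R := by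
    push_cast; ring
  rw [e2]
  refine (norm_add_le _ _).trans ?_
  rw [norm_mul, Complex.norm_real, Complex.norm_real, Real.norm_eq_abs, Real.norm_eq_abs,
    abs_of_pos (Real.exp_pos v)]
  obtain ⟨q1, q2⟩ := abs_le.1 hev
  have hexp2 : Real.exp v ≤ 2 := by nlinarith
  have b1 : |Real.exp v * (1 - v) - 1| ≤ 2 * v ^ 2 := by
    rw [abs_le]
    constructor <;> nlinarith [mul_nonneg hv0 (sq_nonneg v)]
  have b2 : v ^ 2 ≤ |u| ^ 3 / 2 := by
    have : v ^ 2 ≤ (|u| ^ 2 / 2) ^ 2 := by gcongr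
    nlinarith [pow_nonneg hu0 3]
  have b3 : Real.exp v * ‖R‖ ≤ 2 * (2 * |u| ^ 3) := by gcongr
  linarith

/-- conditional variance of the transform -/
def erwVar (X : ℕ → Ω → ℝ) (p : ℝ) (w : ℕ → Ω → ℝ) (m : ℕ) (ω : Ω) : ℝ :=
  ∑ k ∈ Finset.Icc 1 m, w k ω ^ 2 * (1 - ((2 * p - 1) * (erwS X k ω / k)) ^ 2)

theorem erwVar_succ (w : ℕ → Ω → ℝ) (m : ℕ) (ω : Ω) :
    erwVar X p w (m + 1) ω = erwVar X p w m ω + w (m + 1) ω ^ 2 *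
      (1 - ((2 * p - 1) * (erwS X (m + 1) ω / (m + 1 : ℕ))) ^ 2) := by
  unfold erwVar
  rw [Finset.sum_Icc_succ_top (by omega)]

theorem IsERW.bmVar (h : IsERW μ ℱ X p) {w : ℕ → Ω → ℝ} (hw : ∀ k, BM (ℱ k) (w k)) (m : ℕ) :
    BM (ℱ m) (erwVar X p w m) := by
  unfold erwVar
  refine BM.sum fun k hk => ?_
  have := (Finset.mem_Icc.1 hk).2
  exact (((hw k).pow 2).mul ((BM.const 1).sub (((h.bmT k).cmul _).pow 2))).mono (ℱ.mono (by omega))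

theorem IsERW.abs_aT_le (h : IsERW μ ℱ X p) (n : ℕ) (ω : Ω) :
    |(2 * p - 1) * (erwS X n ω / n)| ≤ 1 := by
  rw [abs_mul]
  exact mul_le_one₀ h.abs_a_le (abs_nonneg _) (h.abs_T_le n ω)

theorem IsERW.Var_le (_h : IsERW μ ℱ X p) (w : ℕ → Ω → ℝ) (m : ℕ) (ω : Ω) :
    erwVar X p w m ω ≤ ∑ k ∈ Finset.Icc 1 m, w k ω ^ 2 := by
  unfold erwVar
  refine Finset.sum_le_sum fun k _ => ?_
  exact mul_le_of_le_one_right (sq_nonneg _) (by linarith [sq_nonneg ((2 * p - 1) * (erwS X k ω / k))])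

theorem IsERW.Var_nonneg (h : IsERW μ ℱ X p) (w : ℕ → Ω → ℝ) (m : ℕ) (ω : Ω) :
    0 ≤ erwVar X p w m ω := by
  unfold erwVar
  refine Finset.sum_nonneg fun k _ => mul_nonneg (sq_nonneg _) ?_
  have := h.abs_aT_le k ω
  nlinarith [abs_le.1 this, sq_abs ((2 * p - 1) * (erwS X k ω / k)),
    abs_nonneg ((2 * p - 1) * (erwS X k ω / k))]

/-- exponential (almost-)martingale -/
def erwZ (X : ℕ → Ω → ℝ) (p : ℝ) (w : ℕ → Ω → ℝ) (m : ℕ) (ω : Ω) : ℂ :=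
  Complex.exp (Complex.I * (erwD X p w m ω : ℂ) + ((erwVar X p w m ω / 2 : ℝ) : ℂ))

theorem norm_erwZ (w : ℕ → Ω → ℝ) (m : ℕ) (ω : Ω) :
    ‖erwZ X p w m ω‖ = Real.exp (erwVar X p w m ω / 2) := by
  rw [erwZ, Complex.norm_exp]
  congr 1
  simp

theorem IsERW.Z_bound (h : IsERW μ ℱ X p) {w : ℕ → Ω → ℝ} (hw : ∀ k, BM (ℱ k) (w k))
    {δ K : ℝ} (hδ : δ ≤ 1 / 2) (hwδ : ∀ k ω, |w k ω| ≤ δ)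
    (hK : ∀ m ω, ∑ k ∈ Finset.Icc 1 m, w k ω ^ 2 ≤ K) (m : ℕ) :
    ‖∫ ω, erwZ X p w m ω ∂μ - 1‖ ≤
      5 * δ * Real.exp (K / 2) * ∑ k ∈ Finset.Icc 1 m, ∫ ω, w k ω ^ 2 ∂μ := by
  induction m with
  | zero => simp [erwZ, erwD, erwVar]
  | succ m ih =>
    rw [Finset.sum_Icc_succ_top (by omega), mul_add]
    set s : Ω → ℝ := fun ω => (2 * p - 1) * (erwS X (m + 1) ω / (m + 1 : ℕ)) with hs
    have hle := ℱ.le (m + 1)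
    have hle' := ℱ.le (m + 1 + 1)
    have hmono := ℱ.mono (Nat.le_succ (m + 1))
    have hW := hw (m + 1)
    have bs : BM (ℱ (m + 1)) s := (h.bmT (m + 1)).cmul (2 * p - 1)
    have hX := h.bmX (n := m + 1 + 1) (by omega)
    have bZ : BM (ℱ (m + 1)) (erwZ X p w m) :=
      (((h.bmD hw m).ofReal.cmul _).add
        (((h.bmVar hw m).mono (ℱ.mono (Nat.le_succ m))).div 2).ofReal).cexp
    -- the predictable factor
    set G : Ω → ℂ := fun ω => erwZ X p w m ω *
      (Complex.exp ((w (m + 1) ω ^ 2 * (1 - s ω ^ 2) / 2 : ℝ)) *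
        Complex.exp (-(Complex.I * (w (m + 1) ω * s ω : ℝ)))) with hG
    have bG : BM (ℱ (m + 1)) G := by
      refine bZ.mul (BM.mul ?_ ?_)
      · exact (((hW.pow 2).mul ((BM.const 1).sub (bs.pow 2))).div 2).ofReal.cexp
      · have := ((hW.mul bs).ofReal.cmul (-Complex.I)).cexp
        simpa [neg_mul] using this
    have bcos : BM (ℱ (m + 1)) (fun ω => Complex.cos (w (m + 1) ω)) := by
      refine ⟨(Complex.continuous_cos.comp Complex.continuous_ofReal).comp_stronglyMeasurable hW.1,
        1, fun ω => ?_⟩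
      beta_reduce
      rw [← Complex.ofReal_cos, Complex.norm_real]
      exact Real.abs_cos_le_one _
    have bsin : BM (ℱ (m + 1)) (fun ω => Complex.I * Complex.sin (w (m + 1) ω)) := by
      refine BM.cmul _ ⟨(Complex.continuous_sin.comp
        Complex.continuous_ofReal).comp_stronglyMeasurable hW.1, 1, fun ω => ?_⟩
      beta_reduce
      rw [← Complex.ofReal_sin, Complex.norm_real]
      exact Real.abs_sin_le_one _
    have eZ : ∀ ω, erwZ X p w (m + 1) ω = G ω * Complex.cos (w (m + 1) ω)
        + X (m + 1 + 1) ω • (G ω * (Complex.I * Complex.sin (w (m + 1) ω))) := by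
      intro ω
      have eX : Complex.exp (Complex.I * (w (m + 1) ω * X (m + 1 + 1) ω : ℝ))
          = Complex.cos (w (m + 1) ω) + X (m + 1 + 1) ω * (Complex.I * Complex.sin (w (m + 1) ω)) := by
        rcases h.2.2.1 (m + 1 + 1) (by omega) ω with e | e
        · rw [e]
          simp only [mul_one, Complex.ofReal_one, one_mul]
          rw [mul_comm, Complex.exp_mul_I]; ring
        · rw [e]
          simp only [mul_neg, mul_one, Complex.ofReal_neg, Complex.ofReal_one, neg_mul, one_mul]
          rw [← mul_neg, mul_comm, Complex.exp_mul_I, Complex.cos_neg, Complex.sin_neg]; ring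
      rw [Complex.real_smul]
      have : G ω * Complex.cos (w (m + 1) ω)
          + X (m + 1 + 1) ω * (G ω * (Complex.I * Complex.sin (w (m + 1) ω)))
          = G ω * Complex.exp (Complex.I * (w (m + 1) ω * X (m + 1 + 1) ω : ℝ)) := by
        rw [eX]; ring
      rw [this, hG]
      simp only [erwZ]
      rw [← Complex.exp_add, ← Complex.exp_add, ← Complex.exp_add, erwD_succ, erwVar_succ]
      congr 1
      simp only [hs]
      push_cast
      ring
    have bGs := bG.mul bsin
    have iGs := (bGs.mono hmono).integrable (μ := μ) hle'
    have bXG : Integrable (fun ω => X (m + 1 + 1) ω •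
        (G ω * (Complex.I * Complex.sin (w (m + 1) ω)))) μ := by
      simp_rw [Complex.real_smul]
      exact (hX.ofReal.mul (bGs.mono hmono)).integrable hle'
    have isG : Integrable (fun ω => s ω •
        (G ω * (Complex.I * Complex.sin (w (m + 1) ω)))) μ := by
      simp_rw [Complex.real_smul]
      exact (bs.ofReal.mul bGs).integrable hle
    have eint : ∫ ω, erwZ X p w (m + 1) ω ∂μ - ∫ ω, erwZ X p w m ω ∂μ
        = ∫ ω, erwZ X p w m ω *
          (Complex.exp ((w (m + 1) ω ^ 2 * (1 - s ω ^ 2) / 2 : ℝ)) *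
        Complex.exp (-(Complex.I * (w (m + 1) ω * s ω : ℝ)))
          * (Complex.cos (w (m + 1) ω) + Complex.I * s ω * Complex.sin (w (m + 1) ω)) - 1) ∂μ := by
      simp_rw [eZ]
      have i12 : Integrable (fun ω => G ω * Complex.cos (w (m + 1) ω) + s ω •
          (G ω * (Complex.I * Complex.sin (w (m + 1) ω)))) μ :=
        ((bG.mul bcos).integrable hle).add isG
      rw [integral_add ((bG.mul bcos).integrable hle) bXG, h.integral_mul_X (by omega) bGs,
        ← integral_add ((bG.mul bcos).integrable hle) isG,
        ← integral_sub i12 (bZ.integrable hle)]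
      refine integral_congr_ae (ae_of_all _ fun ω => ?_)
      simp only [Complex.real_smul, hG, hs]
      ring
    have hstep : ‖∫ ω, erwZ X p w (m + 1) ω ∂μ - ∫ ω, erwZ X p w m ω ∂μ‖
        ≤ 5 * δ * Real.exp (K / 2) * ∫ ω, w (m + 1) ω ^ 2 ∂μ := by
      rw [eint, ← integral_const_mul]
      refine norm_integral_le_of_norm_le (((hW.pow 2).cmul _).integrable hle)
        (ae_of_all _ fun ω => ?_)
      rw [norm_mul, norm_erwZ]
      have b1 := step_bound (w (m + 1) ω) (s ω) ((hwδ _ _).trans hδ) (h.abs_aT_le _ _)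
      have b2 : Real.exp (erwVar X p w m ω / 2) ≤ Real.exp (K / 2) := by
        have := (h.Var_le w m ω).trans (hK m ω)
        gcongr
      refine (mul_le_mul b2 b1 (norm_nonneg _) (Real.exp_pos _).le).trans ?_
      have b3 : |w (m + 1) ω| ^ 3 ≤ δ * w (m + 1) ω ^ 2 := by
        rw [pow_succ', sq_abs]
        exact mul_le_mul_of_nonneg_right (hwδ _ _) (sq_nonneg _)
      have := mul_le_mul_of_nonneg_left b3 (Real.exp_pos (K / 2)).le
      linarith
    have e3 : ∫ ω, erwZ X p w (m + 1) ω ∂μ - 1 = (∫ ω, erwZ X p w m ω ∂μ - 1)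
        + (∫ ω, erwZ X p w (m + 1) ω ∂μ - ∫ ω, erwZ X p w m ω ∂μ) := by ring
    rw [e3]
    exact (norm_add_le _ _).trans (add_le_add ih hstep)

theorem IsERW.Z_bound' (h : IsERW μ ℱ X p) {w : ℕ → Ω → ℝ} (hw : ∀ k, BM (ℱ k) (w k))
    {δ K : ℝ} (hδ0 : 0 ≤ δ) (hδ : δ ≤ 1 / 2) (hwδ : ∀ k ω, |w k ω| ≤ δ)
    (hK : ∀ m ω, ∑ k ∈ Finset.Icc 1 m, w k ω ^ 2 ≤ K) (m : ℕ) :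
    ‖∫ ω, erwZ X p w m ω ∂μ - 1‖ ≤ 5 * δ * Real.exp (K / 2) * K := by
  refine (h.Z_bound hw hδ hwδ hK m).trans ?_
  gcongr
  rw [← integral_finsetSum _ fun k _ => ((hw k).pow 2).integrable (ℱ.le k)]
  have hb : BM (ℱ m) (fun ω => ∑ k ∈ Finset.Icc 1 m, w k ω ^ 2) :=
    BM.sum fun k hk => ((hw k).pow 2).mono (ℱ.mono (Finset.mem_Icc.1 hk).2)
  refine (integral_mono (hb.integrable (ℱ.le m))
    ((BM.const (m := ℱ 0) K).integrable (ℱ.le 0)) fun ω => hK m ω).trans ?_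
  simp


/-! ### The martingale central limit theorem -/

theorem erwA_mono {j m : ℕ} (hjm : j ≤ m) (ω : Ω) : erwA X j ω ≤ erwA X m ω := by
  unfold erwA
  exact Finset.sum_le_sum_of_subset_of_nonneg (Finset.Icc_subset_Icc_right hjm)
    fun _ _ _ => sq_nonneg _

/-- truncated weights -/
def erwW (X : ℕ → Ω → ℝ) (c B : ℝ) (k : ℕ) (ω : Ω) : ℝ :=
  if erwA X k ω ≤ B then c * (erwS X k ω / k) else 0

theorem IsERW.abs_W_le (h : IsERW μ ℱ X p) (c B : ℝ) (k : ℕ) (ω : Ω) :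
    |erwW X c B k ω| ≤ |c| := by
  unfold erwW
  split_ifs
  · rw [abs_mul]
    exact mul_le_of_le_one_right (abs_nonneg _) (h.abs_T_le k ω)
  · simp

theorem IsERW.bmW (h : IsERW μ ℱ X p) (c B : ℝ) (k : ℕ) : BM (ℱ k) (erwW X c B k) := by
  refine ⟨?_, |c|, fun ω => h.abs_W_le c B k ω⟩
  unfold erwW
  refine StronglyMeasurable.ite ?_ ((h.bmT k).cmul c).1 stronglyMeasurable_const
  exact (h.bmA k).1.measurable measurableSet_Iic

theorem erwW_sum_le (c : ℝ) {B : ℝ} (hB : 0 ≤ B) (m : ℕ) (ω : Ω) :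
    ∑ k ∈ Finset.Icc 1 m, erwW X c B k ω ^ 2 ≤ c ^ 2 * erwA X m ω ∧
    ∑ k ∈ Finset.Icc 1 m, erwW X c B k ω ^ 2 ≤ c ^ 2 * B := by
  induction m with
  | zero => simp [erwA]; positivity
  | succ m ih =>
    have h1 : ∑ k ∈ Finset.Icc 1 (m + 1), erwW X c B k ω ^ 2 ≤ c ^ 2 * erwA X (m + 1) ω := by
      unfold erwA
      rw [Finset.mul_sum]
      refine Finset.sum_le_sum fun k _ => ?_
      unfold erwW
      split_ifs
      · rw [mul_pow]
      · simp only [ne_eq, OfNat.ofNat_ne_zero, not_false_eq_true, zero_pow]; positivity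
    refine ⟨h1, ?_⟩
    by_cases hA : erwA X (m + 1) ω ≤ B
    · exact h1.trans (by gcongr)
    · rw [Finset.sum_Icc_succ_top (by omega)]
      have : erwW X c B (m + 1) ω = 0 := by simp [erwW, hA]
      rw [this]
      linarith [ih.2]

theorem abs_one_sub_exp_le {x B : ℝ} (hx : |x| ≤ B) : |1 - Real.exp x| ≤ |x| * Real.exp B := by
  have h1 := Real.add_one_le_exp x
  have h2 := Real.add_one_le_exp (-x)
  have hB := Real.one_le_exp (x := B) ((abs_nonneg x).trans hx)
  have hxB : Real.exp x ≤ Real.exp B := Real.exp_le_exp.2 ((le_abs_self x).trans hx)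
  have e : Real.exp x * Real.exp (-x) = 1 := by rw [← Real.exp_add]; simp
  have hp := Real.exp_pos x
  have a0 := abs_nonneg x
  have a1 := le_abs_self x
  have a2 := neg_abs_le x
  rw [abs_le]
  constructor
  · -- exp x - 1 ≤ |x| exp B
    have : Real.exp x - 1 ≤ x * Real.exp x := by nlinarith
    have : x * Real.exp x ≤ |x| * Real.exp B :=
      mul_le_mul a1 hxB hp.le a0
    linarith
  · nlinarith

set_option maxHeartbeats 1000000 in
theorem IsERW.pointwise (h : IsERW μ ℱ X p) (hp : p < 3 / 4) (t : ℝ) {L : ℝ} (hL : 0 < L)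
    (m : ℕ) (ω : Ω) :
    ‖Complex.exp (Complex.I * ((t / √L * erwD X p (fun k ω => erwS X k ω / k) m ω : ℝ) : ℂ))
        - Complex.exp ((-(t ^ 2 / (3 - 4 * p)) / 2 : ℝ) : ℂ)
        - Complex.exp ((-(t ^ 2 / (3 - 4 * p)) / 2 : ℝ) : ℂ) *
          (erwZ X p (erwW X (t / √L) ((1 / (3 - 4 * p) + 1) * L)) m ω - 1)‖
      ≤ (2 + t ^ 2 * (1 / (3 - 4 * p) + 1) * Real.exp (t ^ 2 * (1 / (3 - 4 * p) + 1))
          + t ^ 2 * Real.exp (t ^ 2 * (1 / (3 - 4 * p) + 1))) *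
        (|erwA X m ω / L - 1 / (3 - 4 * p)| + (∑ k ∈ Finset.Icc 1 m, (erwS X k ω / k) ^ 4) / L) := by
  have hb : 0 < 3 - 4 * p := by linarith
  set b := 3 - 4 * p with hbdef
  set K := 1 / b + 1 with hK
  have hb1 : 0 < 1 / b := by positivity
  have hK0 : 0 < K := by positivity
  set W := erwW X (t / √L) (K * L) with hW
  set V := erwVar X p W m ω with hV
  set D := erwD X p W m ω with hD
  set M := erwD X p (fun k ω => erwS X k ω / k) m ω with hM
  set Q := ∑ k ∈ Finset.Icc 1 m, (erwS X k ω / k) ^ 4 with hQ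
  set e1 := |erwA X m ω / L - 1 / b| with he1
  have hQ0 : 0 ≤ Q := Finset.sum_nonneg fun k _ => by positivity
  have hQL : 0 ≤ Q / L := by positivity
  have he0 : 0 ≤ e1 := abs_nonneg _
  have hc2 : (t / √L) ^ 2 = t ^ 2 / L := by rw [div_pow, Real.sq_sqrt hL.le]
  have hV0 : 0 ≤ V := h.Var_nonneg _ _ _
  have hVK : V ≤ t ^ 2 * K := by
    refine (h.Var_le _ _ _).trans ((erwW_sum_le _ (by positivity) m ω).2.trans (le_of_eq ?_))
    rw [hc2]; field_simp
  set x := (V - t ^ 2 / b) / 2 with hx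
  have htb : t ^ 2 / b ≤ t ^ 2 * K := by
    rw [hK, mul_add, mul_one_div]; nlinarith [sq_nonneg t]
  have htb0 : 0 ≤ t ^ 2 / b := by positivity
  have hxB : |x| ≤ t ^ 2 * K := by
    rw [abs_le]; constructor <;> rw [hx] <;> linarith
  have hsec := abs_one_sub_exp_le hxB
  -- algebra
  have alg : Complex.exp (Complex.I * ((t / √L * M : ℝ) : ℂ))
        - Complex.exp ((-(t ^ 2 / b) / 2 : ℝ) : ℂ)
        - Complex.exp ((-(t ^ 2 / b) / 2 : ℝ) : ℂ) * (erwZ X p W m ω - 1)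
      = (Complex.exp (Complex.I * ((t / √L * M : ℝ) : ℂ)) - Complex.exp (Complex.I * (D : ℂ)))
        + Complex.exp (Complex.I * (D : ℂ)) * ((1 - Real.exp x : ℝ) : ℂ) := by
    have : Complex.exp ((-(t ^ 2 / b) / 2 : ℝ) : ℂ) * erwZ X p W m ω
        = Complex.exp (Complex.I * (D : ℂ)) * Complex.exp (x : ℂ) := by
      rw [erwZ, ← Complex.exp_add, ← Complex.exp_add]
      congr 1
      rw [hx]; push_cast; ring
    rw [mul_sub, this, Complex.ofReal_sub, Complex.ofReal_exp, Complex.ofReal_one]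
    ring
  have nI : ∀ y : ℝ, ‖Complex.exp (Complex.I * (y : ℂ))‖ = 1 := fun y => by
    rw [mul_comm]; exact Complex.norm_exp_ofReal_mul_I y
  rw [alg]
  refine (norm_add_le _ _).trans ?_
  rw [norm_mul, nI, one_mul, Complex.norm_real, Real.norm_eq_abs]
  have hE := Real.exp_pos (t ^ 2 * K)
  set E := Real.exp (t ^ 2 * K) with hEdef
  by_cases hA : erwA X m ω ≤ K * L
  · -- good event
    have hWk : ∀ k ∈ Finset.Icc 1 m, W k ω = t / √L * (erwS X k ω / k) := by
      intro k hk
      have := (erwA_mono (X := X) (Finset.mem_Icc.1 hk).2 ω).trans hA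
      simp [hW, erwW, this]
    have hDM : D = t / √L * M := by
      rw [hD, hM, erwD, erwD, Finset.mul_sum]
      refine Finset.sum_congr rfl fun k hk => ?_
      rw [hWk k hk]; ring
    have hVA : V = t ^ 2 / L * (erwA X m ω - (2 * p - 1) ^ 2 * Q) := by
      rw [hV, erwVar, erwA, hQ, Finset.mul_sum, ← Finset.sum_sub_distrib, Finset.mul_sum]
      refine Finset.sum_congr rfl fun k hk => ?_
      rw [hWk k hk, mul_pow, hc2]; ring
    rw [hDM, sub_self, norm_zero, zero_add]
    refine hsec.trans ?_
    have ha2 : (2 * p - 1) ^ 2 ≤ 1 := by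
      have := h.abs_a_le
      rw [← sq_abs]; nlinarith [abs_nonneg (2 * p - 1)]
    have hxx : |x| ≤ t ^ 2 * (e1 + Q / L) := by
      have : x = t ^ 2 / 2 * ((erwA X m ω / L - 1 / b) - (2 * p - 1) ^ 2 * (Q / L)) := by
        rw [hx, hVA]; field_simp; ring
      rw [this, abs_mul, abs_of_nonneg (by positivity : 0 ≤ t ^ 2 / 2)]
      have h3 : |(erwA X m ω / L - 1 / b) - (2 * p - 1) ^ 2 * (Q / L)| ≤ e1 + Q / L := by
        refine (abs_sub _ _).trans ?_
        rw [abs_of_nonneg (by positivity : 0 ≤ (2 * p - 1) ^ 2 * (Q / L))]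
        have := mul_le_of_le_one_left hQL ha2
        linarith
      have h4 := mul_le_mul_of_nonneg_left h3 (by positivity : 0 ≤ t ^ 2 / 2)
      nlinarith [mul_nonneg (sq_nonneg t) (add_nonneg he0 hQL)]
    have h5 := mul_le_mul_of_nonneg_right hxx hE.le
    have h6 : 0 ≤ (2 + t ^ 2 * K * E) * (e1 + Q / L) := by positivity
    linarith
  · have h1 : 1 ≤ e1 := by
      push Not at hA
      have : K ≤ erwA X m ω / L := by rw [le_div_iff₀ hL]; exact hA.le
      rw [he1]
      refine le_trans ?_ (le_abs_self _)
      rw [hK] at this; linarith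
    have h2 : ‖Complex.exp (Complex.I * ((t / √L * M : ℝ) : ℂ)) - Complex.exp (Complex.I * (D : ℂ))‖
        ≤ 2 := by
      refine (norm_sub_le _ _).trans ?_
      rw [nI, nI]; norm_num
    have h3 := mul_le_mul_of_nonneg_right hxB hE.le
    have h4 : (2 + t ^ 2 * K * E) * 1 ≤ (2 + t ^ 2 * K * E + t ^ 2 * E) * (e1 + Q / L) := by
      refine mul_le_mul ?_ (by linarith) (by norm_num) (by positivity)
      have : 0 ≤ t ^ 2 * E := by positivity
      linarith
    linarith

set_option maxHeartbeats 1000000 in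
theorem IsERW.cf_bound (h : IsERW μ ℱ X p) (hp : p < 3 / 4) (t : ℝ) :
    ∃ C : ℝ, ∀ (m : ℕ), 0 < Real.log (m + 1) → |t / √(Real.log (m + 1))| ≤ 1 / 2 →
      ‖∫ ω, Complex.exp (Complex.I * ((t / √(Real.log (m + 1)) *
          erwD X p (fun k ω => erwS X k ω / k) m ω : ℝ) : ℂ)) ∂μ
        - Complex.exp ((-(t ^ 2 / (3 - 4 * p)) / 2 : ℝ) : ℂ)‖
      ≤ C * (√(1 + Real.log (m + 1)) / Real.log (m + 1) + 1 / Real.log (m + 1)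
          + |t / √(Real.log (m + 1))|) := by
  have hb : 0 < 3 - 4 * p := by linarith
  obtain ⟨C, hC0, hC⟩ := h.A_L1 hp
  set b := 3 - 4 * p with hbdef
  set K := 1 / b + 1 with hK
  have hK0 : 0 < K := by positivity
  set E := Real.exp (t ^ 2 * K) with hE
  have hEpos : 0 < E := Real.exp_pos _
  set C1 := 2 + t ^ 2 * K * E + t ^ 2 * E with hC1
  have hC10 : 0 ≤ C1 := by positivity
  set C2 := 5 * Real.exp (t ^ 2 * K / 2) * (t ^ 2 * K) with hC2
  have hC20 : 0 ≤ C2 := by positivity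
  refine ⟨C1 * (C / b) + C1 * C + C2, fun m hL hδ => ?_⟩
  obtain ⟨c1, -, c3⟩ := hC m
  set L := Real.log (m + 1) with hLdef
  set W := erwW X (t / √L) (K * L) with hW
  set δ := |t / √L| with hδd
  have hc2 : (t / √L) ^ 2 = t ^ 2 / L := by rw [div_pow, Real.sq_sqrt hL.le]
  have hZ := h.Z_bound' (w := W) (fun k => h.bmW _ _ k) (abs_nonneg (t / √L)) hδ
    (fun k ω => h.abs_W_le _ _ k ω) (K := t ^ 2 * K) (fun m ω => by
      refine (erwW_sum_le _ (by positivity) m ω).2.trans (le_of_eq ?_)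
      rw [hc2]; field_simp) m
  have hle := ℱ.le (m + 1)
  have bD := h.bmD (w := fun k ω => erwS X k ω / k) h.bmT m
  have bF : BM (ℱ (m + 1)) (fun ω => Complex.exp (Complex.I * ((t / √L *
          erwD X p (fun k ω => erwS X k ω / k) m ω : ℝ) : ℂ))) :=
    ((bD.cmul _).ofReal.cmul _).cexp
  have bZ : BM (ℱ (m + 1)) (erwZ X p W m) :=
    (((h.bmD (fun k => h.bmW _ _ k) m).ofReal.cmul _).add
        (((h.bmVar (fun k => h.bmW _ _ k) m).mono (ℱ.mono (Nat.le_succ m))).div 2).ofReal).cexp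
  set e0 : ℂ := Complex.exp ((-(t ^ 2 / b) / 2 : ℝ) : ℂ) with he0
  have ne0 : ‖e0‖ ≤ 1 := by
    rw [he0, Complex.norm_exp, Complex.ofReal_re, Real.exp_le_one_iff]
    have : 0 ≤ t ^ 2 / b := by positivity
    linarith
  have bA : BM (ℱ (m + 1)) (fun ω => |erwA X m ω / L - 1 / b|) :=
    ((((h.bmA m).mono (ℱ.mono (Nat.le_succ m))).div L).sub (BM.const (1 / b))).abs
  have bQ : BM (ℱ (m + 1)) (fun ω => ∑ k ∈ Finset.Icc 1 m, (erwS X k ω / k) ^ 4) :=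
    BM.sum fun k hk => ((h.bmT k).pow 4).mono
      (ℱ.mono ((Finset.mem_Icc.1 hk).2.trans (Nat.le_succ m)))
  have key : ‖∫ ω, (Complex.exp (Complex.I * ((t / √L *
          erwD X p (fun k ω => erwS X k ω / k) m ω : ℝ) : ℂ)) - e0 - e0 * (erwZ X p W m ω - 1)) ∂μ‖
      ≤ ∫ ω, C1 * (|erwA X m ω / L - 1 / b| +
        (∑ k ∈ Finset.Icc 1 m, (erwS X k ω / k) ^ 4) / L) ∂μ :=
    norm_integral_le_of_norm_le (((bA.add (bQ.div L)).cmul C1).integrable hle)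
      (ae_of_all _ fun ω => h.pointwise hp t hL m ω)
  have s1 : ∫ ω, (Complex.exp (Complex.I * ((t / √L *
          erwD X p (fun k ω => erwS X k ω / k) m ω : ℝ) : ℂ)) - e0 - e0 * (erwZ X p W m ω - 1)) ∂μ
      = (∫ ω, Complex.exp (Complex.I * ((t / √L *
          erwD X p (fun k ω => erwS X k ω / k) m ω : ℝ) : ℂ)) ∂μ - e0)
        - e0 * (∫ ω, erwZ X p W m ω ∂μ - 1) := by
    have i0 : Integrable (fun _ : Ω => e0) μ := integrable_const _
    have i1 : Integrable (fun _ : Ω => (1 : ℂ)) μ := integrable_const _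
    rw [integral_sub ((bF.sub (BM.const e0)).integrable hle)
      (((bZ.sub (BM.const 1)).cmul e0).integrable hle),
      integral_sub (bF.integrable hle) i0, integral_const_mul,
      integral_sub (bZ.integrable hle) i1]
    simp
  have s2 : ∫ ω, C1 * (|erwA X m ω / L - 1 / b| +
        (∑ k ∈ Finset.Icc 1 m, (erwS X k ω / k) ^ 4) / L) ∂μ
      ≤ C1 * (C / b * (√(1 + L) / L) + C * (1 / L)) := by
    rw [integral_const_mul, integral_add (bA.integrable hle) ((bQ.div L).integrable hle),
      integral_div]
    refine mul_le_mul_of_nonneg_left (add_le_add ?_ ?_) hC10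
    · have : ∀ ω, |erwA X m ω / L - 1 / b| = 1 / (b * L) * |b * erwA X m ω - L| := by
        intro ω
        have e : erwA X m ω / L - 1 / b = 1 / (b * L) * (b * erwA X m ω - L) := by field_simp
        rw [e, abs_mul, abs_of_pos (by positivity : 0 < 1 / (b * L))]
      simp_rw [this]
      rw [integral_const_mul]
      refine (mul_le_mul_of_nonneg_left c1 (by positivity)).trans (le_of_eq ?_)
      field_simp
    · rw [mul_one_div]
      gcongr
  rw [s1] at key
  set I := ∫ ω, Complex.exp (Complex.I * ((t / √L *
          erwD X p (fun k ω => erwS X k ω / k) m ω : ℝ) : ℂ)) ∂μ with hI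
  have tri : ‖I - e0‖ ≤ ‖(I - e0) - e0 * (∫ ω, erwZ X p W m ω ∂μ - 1)‖
      + ‖e0 * (∫ ω, erwZ X p W m ω ∂μ - 1)‖ := by
    simpa using norm_add_le ((I - e0) - e0 * (∫ ω, erwZ X p W m ω ∂μ - 1))
      (e0 * (∫ ω, erwZ X p W m ω ∂μ - 1))
  have s3 : ‖e0 * (∫ ω, erwZ X p W m ω ∂μ - 1)‖ ≤ C2 * δ := by
    rw [norm_mul]
    refine (mul_le_mul ne0 hZ (norm_nonneg _) zero_le_one).trans (le_of_eq ?_)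
    rw [hC2]; ring
  have r0 : 0 ≤ √(1 + L) / L := by positivity
  have r1 : 0 ≤ 1 / L := by positivity
  have r2 : 0 ≤ δ := abs_nonneg _
  have hCb : 0 ≤ C / b := by positivity
  have q1 : 0 ≤ C1 * (C / b) := by positivity
  have q2 : 0 ≤ C1 * C := by positivity
  nlinarith [mul_nonneg q1 r1, mul_nonneg q1 r2, mul_nonneg q2 r0, mul_nonneg q2 r2,
    mul_nonneg hC20 r0, mul_nonneg hC20 r1]

theorem tendsto_L : Tendsto (fun m : ℕ => Real.log ((m : ℝ) + 1)) atTop atTop :=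
  Real.tendsto_log_atTop.comp (tendsto_atTop_add_const_right _ _ tendsto_natCast_atTop_atTop)

theorem tendsto_inv_L : Tendsto (fun m : ℕ => 1 / Real.log ((m : ℝ) + 1)) atTop (𝓝 0) := by
  exact tendsto_L.const_div_atTop 1

theorem tendsto_sqrt_L :
    Tendsto (fun m : ℕ => √(1 + Real.log ((m : ℝ) + 1)) / Real.log ((m : ℝ) + 1)) atTop (𝓝 0) := by
  have h1 : Tendsto (fun m : ℕ => √((1 / Real.log ((m : ℝ) + 1)) ^ 2 + 1 / Real.log ((m : ℝ) + 1)))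
      atTop (𝓝 0) := by
    simpa using ((tendsto_inv_L.pow 2).add tendsto_inv_L).sqrt
  refine h1.congr' ?_
  filter_upwards [tendsto_L.eventually_gt_atTop 0] with m hm
  have : (1 / Real.log ((m : ℝ) + 1)) ^ 2 + 1 / Real.log ((m : ℝ) + 1)
      = (1 + Real.log ((m : ℝ) + 1)) / Real.log ((m : ℝ) + 1) ^ 2 := by
    field_simp
  rw [this, Real.sqrt_div' _ (by positivity), Real.sqrt_sq hm.le]

theorem tendsto_t_L (t : ℝ) :
    Tendsto (fun m : ℕ => |t / √(Real.log ((m : ℝ) + 1))|) atTop (𝓝 0) := by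
  have := (Real.tendsto_sqrt_atTop.comp tendsto_L).const_div_atTop t
  simpa using this.abs

theorem IsERW.cf_tendsto (h : IsERW μ ℱ X p) (hp : p < 3 / 4) (t : ℝ) :
    Tendsto (fun m : ℕ => ∫ ω, Complex.exp (Complex.I * ((t / √(Real.log (m + 1)) *
          erwD X p (fun k ω => erwS X k ω / k) m ω : ℝ) : ℂ)) ∂μ) atTop
      (𝓝 (Complex.exp ((-(t ^ 2 / (3 - 4 * p)) / 2 : ℝ) : ℂ))) := by
  obtain ⟨C, hC⟩ := h.cf_bound hp t
  rw [tendsto_iff_norm_sub_tendsto_zero]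
  have hz : Tendsto (fun m : ℕ => C * (√(1 + Real.log ((m : ℝ) + 1)) / Real.log (m + 1)
      + 1 / Real.log (m + 1) + |t / √(Real.log (m + 1))|)) atTop (𝓝 0) := by
    simpa using ((tendsto_sqrt_L.add tendsto_inv_L).add (tendsto_t_L t)).const_mul C
  refine squeeze_zero' (Eventually.of_forall fun _ => norm_nonneg _) ?_ hz
  filter_upwards [tendsto_L.eventually_gt_atTop 0,
    (tendsto_t_L t).eventually_le_const (by norm_num : (0 : ℝ) < 1 / 2)] with m h1 h2
  exact hC m h1 h2

theorem IsERW.clt (h : IsERW μ ℱ X p) (hp : p < 3 / 4) :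
    TendstoInDistribution
      (fun (m : ℕ) ω => erwD X p (fun k ω => erwS X k ω / k) m ω / √(Real.log (m + 1)))
      atTop (fun x : ℝ => x / √(3 - 4 * p)) (fun _ => μ) (gaussianReal 0 1) where
  forall_aemeasurable m :=
    (((h.bmD h.bmT m).div _).1.mono (ℱ.le _)).measurable.aemeasurable
  tendsto := by
    have hb : 0 < 3 - 4 * p := by linarith
    refine ProbabilityMeasure.tendsto_iff_tendsto_charFun.2 fun t => ?_
    have hlim : charFun (Measure.map (fun x : ℝ => x / √(3 - 4 * p)) (gaussianReal 0 1)) t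
        = Complex.exp ((-(t ^ 2 / (3 - 4 * p)) / 2 : ℝ) : ℂ) := by
      rw [gaussianReal_map_div_const, charFun_gaussianReal]
      congr 1
      simp only [zero_div, Complex.ofReal_zero, mul_zero, zero_mul, zero_sub]
      have : (((1 / NNReal.mk (√(3 - 4 * p) ^ 2) (sq_nonneg _) : ℝ≥0) : ℝ)) = 1 / (3 - 4 * p) := by
        rw [NNReal.coe_div, NNReal.coe_mk, Real.sq_sqrt hb.le]; simp
      rw [this]
      push_cast
      ring
    simp only [ProbabilityMeasure.coe_mk]
    rw [hlim]
    refine (h.cf_tendsto hp t).congr fun m => ?_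
    rw [charFun_apply_real, integral_map]
    · refine integral_congr_ae (ae_of_all _ fun ω => ?_)
      simp only
      congr 1
      push_cast
      ring
    · exact (((h.bmD h.bmT m).div _).1.mono (ℱ.le _)).measurable.aemeasurable
    · exact Continuous.aestronglyMeasurable (by fun_prop)

theorem cont_g (b : ℝ) (hb : 0 < b) :
    ContinuousAt (fun z : ℝ × ℝ => z.1⁻¹ / √(b - 2 * (z.2 / z.1))) (1 / b, 0) := by
  have h1 : (1 / b : ℝ) ≠ 0 := by positivity
  refine ContinuousAt.div ?_ ?_ ?_
  · exact continuousAt_fst.inv₀ h1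
  · refine ContinuousAt.sqrt ?_
    exact continuousAt_const.sub (continuousAt_const.mul (continuousAt_snd.div continuousAt_fst h1))
  · simp only [zero_div, mul_zero, sub_zero]
    positivity

theorem IsERW.R_tendsto (h : IsERW μ ℱ X p) (hp : p < 3 / 4) :
    TendstoInMeasure μ (fun (m : ℕ) ω => (erwA X m ω / Real.log (m + 1))⁻¹ /
      √(3 - 4 * p - 2 * ((erwD X p (fun k ω => erwS X k ω / k) m ω / Real.log (m + 1)) /
        (erwA X m ω / Real.log (m + 1))))) atTop (fun _ => √(3 - 4 * p)) := by
  have hb : 0 < 3 - 4 * p := by linarith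
  obtain ⟨C, hC0, hC⟩ := h.A_L1 hp
  set b := 3 - 4 * p with hbdef
  rw [tendstoInMeasure_iff_measureReal_dist]
  intro ε hε
  obtain ⟨δ, hδ, hcont⟩ := Metric.continuousAt_iff.1 (cont_g b hb) ε hε
  have hg0 : ((1 / b, 0) : ℝ × ℝ).1⁻¹ / √(b - 2 * (((1 / b, 0) : ℝ × ℝ).2 / ((1 / b, 0) : ℝ × ℝ).1))
      = √b := by
    simp only [zero_div, mul_zero, sub_zero, one_div, inv_inv]
    exact Real.div_sqrt
  have hz : Tendsto (fun m : ℕ => (C / b / δ + C / δ) *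
      (√(1 + Real.log ((m : ℝ) + 1)) / Real.log (m + 1))) atTop (𝓝 0) := by
    simpa using tendsto_sqrt_L.const_mul (C / b / δ + C / δ)
  refine squeeze_zero' (Eventually.of_forall fun _ => measureReal_nonneg) ?_ hz
  filter_upwards [tendsto_L.eventually_gt_atTop 0] with m hL
  obtain ⟨c1, c2, -⟩ := hC m
  set L := Real.log ((m : ℝ) + 1) with hLdef
  set M := erwD X p (fun k ω => erwS X k ω / k) m with hM
  have bA : BM (ℱ m) (fun ω => |erwA X m ω / L - 1 / b|) :=
    (((h.bmA m).div L).sub (BM.const (1 / b))).abs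
  have bM : BM (ℱ (m + 1)) (fun ω => |M ω / L|) := ((h.bmD h.bmT m).div L).abs
  have k1 := mul_meas_ge_le_integral_of_nonneg (μ := μ) (ae_of_all _ fun ω => abs_nonneg _)
    (bA.integrable (ℱ.le _)) δ
  have k2 := mul_meas_ge_le_integral_of_nonneg (μ := μ) (ae_of_all _ fun ω => abs_nonneg _)
    (bM.integrable (ℱ.le _)) δ
  have i1 : ∫ ω, |erwA X m ω / L - 1 / b| ∂μ ≤ C / b * (√(1 + L) / L) := by
    have : ∀ ω, |erwA X m ω / L - 1 / b| = 1 / (b * L) * |b * erwA X m ω - L| := by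
      intro ω
      have e : erwA X m ω / L - 1 / b = 1 / (b * L) * (b * erwA X m ω - L) := by field_simp
      rw [e, abs_mul, abs_of_pos (by positivity : 0 < 1 / (b * L))]
    simp_rw [this]
    rw [integral_const_mul]
    refine (mul_le_mul_of_nonneg_left c1 (by positivity)).trans (le_of_eq ?_)
    field_simp
  have i2 : ∫ ω, |M ω / L| ∂μ ≤ C * (√(1 + L) / L) := by
    simp_rw [abs_div, abs_of_pos hL]
    rw [integral_div, ← mul_div_assoc]
    gcongr
  have sub : {ω | ε ≤ dist ((erwA X m ω / L)⁻¹ / √(b - 2 * ((M ω / L) / (erwA X m ω / L)))) (√b)}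
      ⊆ {ω | δ ≤ |erwA X m ω / L - 1 / b|} ∪ {ω | δ ≤ |M ω / L|} := by
    intro ω hω
    by_contra hn
    simp only [Set.mem_union, Set.mem_ofPred_eq, not_or, not_le] at hn hω
    have := hcont (x := (erwA X m ω / L, M ω / L)) (by
      rw [Prod.dist_eq, max_lt_iff, Real.dist_eq, Real.dist_eq]
      simpa using hn)
    rw [hg0] at this
    simp only at this
    linarith
  refine (measureReal_mono sub).trans ((measureReal_union_le _ _).trans ?_)
  have j1 : μ.real {ω | δ ≤ |erwA X m ω / L - 1 / b|} ≤ C / b * (√(1 + L) / L) / δ := by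
    rw [le_div_iff₀ hδ, mul_comm]; exact k1.trans i1
  have j2 : μ.real {ω | δ ≤ |M ω / L|} ≤ C * (√(1 + L) / L) / δ := by
    rw [le_div_iff₀ hδ, mul_comm]; exact k2.trans i2
  refine (add_le_add j1 j2).trans (le_of_eq ?_)
  ring

theorem IsERW.stat_eq (h : IsERW μ ℱ X p) {m : ℕ} (hm : 1 ≤ m) (ω : Ω) :
    2 * √(Real.log ((m + 1 : ℕ) : ℝ)) * (erwPhat X (m + 1) ω - p) /
        √(3 - 4 * erwPhat X (m + 1) ω)
    = erwD X p (fun k ω => erwS X k ω / k) m ω / √(Real.log (m + 1)) *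
      ((erwA X m ω / Real.log (m + 1))⁻¹ /
      √(3 - 4 * p - 2 * ((erwD X p (fun k ω => erwS X k ω / k) m ω / Real.log (m + 1)) /
        (erwA X m ω / Real.log (m + 1))))) := by
  have hA : 0 < erwA X m ω := by
    have := erwA_mono (X := X) hm ω
    have h1 : erwA X 1 ω = 1 := by simp [erwA, h.S_one_sq]
    linarith
  have hL : 0 < Real.log ((m : ℝ) + 1) := Real.log_pos (by
    have : (1 : ℝ) ≤ m := by exact_mod_cast hm
    linarith)
  set M := erwD X p (fun k ω => erwS X k ω / k) m ω with hM
  have hP : erwPhat X (m + 1) ω = p + M / (2 * erwA X m ω) := by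
    have hnum : ∑ k ∈ Finset.Icc 1 (m + 1 - 1), (erwS X k ω / k) * (X (k + 1) ω + erwS X k ω / k)
        = M + 2 * p * erwA X m ω := by
      rw [hM, erwD, erwA, Finset.mul_sum, ← Finset.sum_add_distrib, Nat.add_sub_cancel]
      refine Finset.sum_congr rfl fun k _ => ?_
      ring
    rw [erwPhat, hnum]
    change _ / (2 * erwA X m ω) = _
    field_simp
    ring
  rw [hP]
  push_cast
  set L := Real.log ((m : ℝ) + 1) with hLdef
  set A := erwA X m ω
  have e1 : 3 - 4 * (p + M / (2 * A)) = 3 - 4 * p - 2 * (M / L / (A / L)) := by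
    field_simp
    ring
  rw [e1, add_sub_cancel_left, ← mul_div_assoc]
  have hs : √L ≠ 0 := (Real.sqrt_pos.2 hL).ne'
  field_simp
  rw [Real.sq_sqrt hL.le]
  ring

end ERW

/-- In the diffusive regime `0 ≤ p < 3/4`, the studentized statistic
`2 √(log n) (p̂_n - p) / √(3 - 4 p̂_n)` converges in distribution to `N(0,1)`. -/
theorem erw_studentized_clt_diffusive
    {m0 : MeasurableSpace Ω} (μ : Measure Ω) [IsProbabilityMeasure μ]
    (ℱ : Filtration ℕ m0) (X : ℕ → Ω → ℝ) (p : ℝ)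
    (hERW : IsERW μ ℱ X p) (hp : p < 3 / 4) :
    ∀ f : ℝ →ᵇ ℝ,
      Tendsto (fun n : ℕ => ∫ ω,
          f (2 * Real.sqrt (Real.log n) * (erwPhat X n ω - p) /
              Real.sqrt (3 - 4 * erwPhat X n ω)) ∂μ)
        atTop (𝓝 (∫ x, f x ∂(gaussianReal 0 1))) := by
  intro f
  have hb : 0 < 3 - 4 * p := by linarith
  rw [← tendsto_add_atTop_iff_nat 1]
  have hR := hERW.R_tendsto hp
  have key := (hERW.clt hp).continuous_comp_prodMk_of_tendstoInMeasure_const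
    (g := fun z : ℝ × ℝ => z.1 * z.2) (by fun_prop) hR (fun m => by
      have mA : Measurable (erwA X m) := ((hERW.bmA m).1.mono (ℱ.le _)).measurable
      have mD : Measurable (erwD X p (fun k ω => erwS X k ω / k) m) :=
        ((hERW.bmD hERW.bmT m).1.mono (ℱ.le _)).measurable
      fun_prop)
  have key2 := ProbabilityMeasure.tendsto_iff_forall_integral_tendsto.1 key.tendsto f
  simp only [ProbabilityMeasure.coe_mk] at key2
  have hlim : ∫ x, f x ∂(Measure.map (fun x : ℝ => x / √(3 - 4 * p) * √(3 - 4 * p))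
      (gaussianReal 0 1)) = ∫ x, f x ∂(gaussianReal 0 1) := by
    have : (fun x : ℝ => x / √(3 - 4 * p) * √(3 - 4 * p)) = id := by
      funext x
      exact div_mul_cancel₀ x (Real.sqrt_pos.2 hb).ne'
    rw [this, Measure.map_id]
  rw [hlim] at key2
  refine key2.congr' ?_
  filter_upwards [eventually_ge_atTop 1] with m hm
  rw [integral_map (key.forall_aemeasurable m) f.continuous.aestronglyMeasurable]
  refine integral_congr_ae (ae_of_all _ fun ω => ?_)
  simp only
  rw [hERW.stat_eq hm ω]
end
end

section
/- Local asymptotic normality in the diffusive regime: let 0 < p < 3/4 and let (h_n) be a sequence of real numbers converging to a real number h. Then, almost surely, the log-likelihood ratio satisfies Λ_n(p + h_n (log n)^{−1/2}) − Λ_n(p) = h_n·Δ_n(p) − (h_n²/2)·(V_n/log n) + o(1) as n → ∞, where Δ_n(p) = 2 P_n/√(log n). -/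
open MeasureTheory ProbabilityTheory Filter Finset
open scoped BoundedContinuousFunction ENNReal NNReal Topology

noncomputable section

variable {Ω : Type*}

/-- The score-type martingale `P n = ∑_{k=1}^{n-1} (S k / k) ε_{k+1} / (1 - a² (S k / k)²)`. -/
def erwP (X : ℕ → Ω → ℝ) (a : ℝ) (n : ℕ) (ω : Ω) : ℝ :=
  ∑ k ∈ Finset.Icc 1 (n - 1),
    (erwS X k ω / k) * (X (k + 1) ω - a * (erwS X k ω / k)) /
      (1 - a ^ 2 * (erwS X k ω / k) ^ 2)

/-- The log-likelihood function (up to an additive term independent of `u`). -/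
def erwLogLik (X : ℕ → Ω → ℝ) (u : ℝ) (n : ℕ) (ω : Ω) : ℝ :=
  ∑ k ∈ Finset.Icc 1 (n - 1),
    ((1 + X (k + 1) ω) / 2 * Real.log ((1 + (2 * u - 1) * (erwS X k ω / k)) / 2) +
      (1 - X (k + 1) ω) / 2 * Real.log ((1 - (2 * u - 1) * (erwS X k ω / k)) / 2))

/-! ### Auxiliary lemmas -/

lemma erw_abs_le {X : ℕ → Ω → ℝ} (hX : ∀ n, 1 ≤ n → ∀ ω, X n ω = 1 ∨ X n ω = -1)
    (n : ℕ) (ω : Ω) : |erwS X n ω| ≤ n := by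
  unfold erwS
  refine (Finset.abs_sum_le_sum_abs _ _).trans ?_
  have : ∀ k ∈ Finset.Icc 1 n, |X k ω| ≤ 1 := by
    intro k hk
    rcases hX k (Finset.mem_Icc.1 hk).1 ω with h | h <;> simp [h]
  refine (Finset.sum_le_sum this).trans ?_
  simp

lemma erw_succ (X : ℕ → Ω → ℝ) (n : ℕ) (ω : Ω) :
    erwS X (n + 1) ω = erwS X n ω + X (n + 1) ω := by
  unfold erwS
  rw [Finset.sum_Icc_succ_top (by omega)]

lemma erw_meas {m0 : MeasurableSpace Ω} {ℱ : Filtration ℕ m0} {X : ℕ → Ω → ℝ}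
    (hm : ∀ n, 1 ≤ n → Measurable[ℱ n] (X n)) (n : ℕ) : Measurable[ℱ n] (erwS X n) := by
  unfold erwS
  refine Finset.measurable_fun_sum _ fun k hk => ?_
  have := Finset.mem_Icc.1 hk
  exact (hm k this.1).mono (ℱ.mono this.2) le_rfl

lemma erw_int_pow {m0 : MeasurableSpace Ω} {μ : Measure Ω} [IsProbabilityMeasure μ]
    {ℱ : Filtration ℕ m0} {X : ℕ → Ω → ℝ}
    (hX : ∀ n, 1 ≤ n → ∀ ω, X n ω = 1 ∨ X n ω = -1)
    (hm : ∀ n, 1 ≤ n → Measurable[ℱ n] (X n)) (n j : ℕ) :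
    Integrable (fun ω => erwS X n ω ^ j) μ := by
  refine Integrable.of_bound (C := (n : ℝ) ^ j) ?_ (ae_of_all _ fun ω => ?_)
  · exact (((erw_meas hm n).mono (ℱ.le n) le_rfl).pow_const j).aestronglyMeasurable
  · rw [norm_pow]
    exact pow_le_pow_left₀ (norm_nonneg _) (erw_abs_le hX n ω) j

lemma erw_int_X {m0 : MeasurableSpace Ω} {μ : Measure Ω} [IsProbabilityMeasure μ]
    {ℱ : Filtration ℕ m0} {X : ℕ → Ω → ℝ}
    (hX : ∀ n, 1 ≤ n → ∀ ω, X n ω = 1 ∨ X n ω = -1)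
    (hm : ∀ n, 1 ≤ n → Measurable[ℱ n] (X n)) (n : ℕ) (hn : 1 ≤ n) :
    Integrable (X n) μ := by
  refine Integrable.of_bound (C := 1) ?_ (ae_of_all _ fun ω => ?_)
  · exact ((hm n hn).mono (ℱ.le n) le_rfl).aestronglyMeasurable
  · rcases hX n hn ω with h | h <;> simp [h]

lemma erw_int_pow_mul {m0 : MeasurableSpace Ω} {μ : Measure Ω} [IsProbabilityMeasure μ]
    {ℱ : Filtration ℕ m0} {X : ℕ → Ω → ℝ}
    (hX : ∀ n, 1 ≤ n → ∀ ω, X n ω = 1 ∨ X n ω = -1)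
    (hm : ∀ n, 1 ≤ n → Measurable[ℱ n] (X n)) (n j : ℕ) :
    Integrable (fun ω => erwS X n ω ^ j * X (n + 1) ω) μ := by
  refine Integrable.of_bound (C := (n : ℝ) ^ j * 1) ?_ (ae_of_all _ fun ω => ?_)
  · exact ((((erw_meas hm n).mono (ℱ.le n) le_rfl).pow_const j).mul
      ((hm (n+1) (by omega)).mono (ℱ.le _) le_rfl)).aestronglyMeasurable
  · rw [norm_mul, norm_pow]
    refine mul_le_mul (pow_le_pow_left₀ (norm_nonneg _) (erw_abs_le hX n ω) j) ?_
      (norm_nonneg _) (by positivity)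
    rcases hX (n+1) (by omega) ω with h | h <;> simp [h]

lemma erw_cross {m0 : MeasurableSpace Ω} {μ : Measure Ω} [IsProbabilityMeasure μ]
    {ℱ : Filtration ℕ m0} {X : ℕ → Ω → ℝ} {p : ℝ} (hE : IsERW μ ℱ X p)
    (n j : ℕ) (hn : 1 ≤ n) :
    ∫ ω, erwS X n ω ^ j * X (n + 1) ω ∂μ
      = (2 * p - 1) / n * ∫ ω, erwS X n ω ^ (j + 1) ∂μ := by
  obtain ⟨_, _, hX, hm, hc⟩ := hE
  have h1 := condExp_mul_of_stronglyMeasurable_left (μ := μ) (m := ℱ n)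
    (f := fun ω => erwS X n ω ^ j) (g := X (n + 1))
    ((erw_meas hm n).pow_const j).stronglyMeasurable
    (erw_int_pow_mul hX hm n j) (erw_int_X hX hm (n + 1) (by omega))
  have h2 := integral_condExp (μ := μ) (ℱ.le n) (f := (fun ω => erwS X n ω ^ j) * X (n + 1))
  rw [integral_congr_ae h1] at h2
  have h3 : ∫ ω, erwS X n ω ^ j * X (n + 1) ω ∂μ
      = ∫ ω, ((fun ω => erwS X n ω ^ j) * X (n + 1)) ω ∂μ := rfl
  rw [h3, ← h2, ← integral_const_mul]
  refine integral_congr_ae ?_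
  filter_upwards [hc n hn] with ω hω
  simp only [Pi.mul_apply, hω]
  ring

lemma erw_sq_rec {m0 : MeasurableSpace Ω} {μ : Measure Ω} [IsProbabilityMeasure μ]
    {ℱ : Filtration ℕ m0} {X : ℕ → Ω → ℝ} {p : ℝ} (hE : IsERW μ ℱ X p)
    (n : ℕ) (hn : 1 ≤ n) :
    ∫ ω, erwS X (n + 1) ω ^ 2 ∂μ
      = (1 + 2 * (2 * p - 1) / n) * (∫ ω, erwS X n ω ^ 2 ∂μ) + 1 := by
  have hc := erw_cross hE n 1 hn
  obtain ⟨_, _, hX, hm, _⟩ := hE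
  have : ∀ ω, erwS X (n + 1) ω ^ 2
      = erwS X n ω ^ 2 + 2 * (erwS X n ω ^ 1 * X (n + 1) ω) + 1 := by
    intro ω
    rw [erw_succ]
    rcases hX (n + 1) (by omega) ω with h | h <;> rw [h] <;> ring
  simp_rw [this]
  rw [integral_add, integral_add, integral_const_mul, hc]
  · simp; ring
  · exact erw_int_pow hX hm n 2
  · exact (erw_int_pow_mul hX hm n 1).const_mul 2
  · exact (erw_int_pow hX hm n 2).add ((erw_int_pow_mul hX hm n 1).const_mul 2)
  · exact integrable_const _

lemma erw_four_rec {m0 : MeasurableSpace Ω} {μ : Measure Ω} [IsProbabilityMeasure μ]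
    {ℱ : Filtration ℕ m0} {X : ℕ → Ω → ℝ} {p : ℝ} (hE : IsERW μ ℱ X p)
    (n : ℕ) (hn : 1 ≤ n) :
    ∫ ω, erwS X (n + 1) ω ^ 4 ∂μ
      = (1 + 4 * (2 * p - 1) / n) * (∫ ω, erwS X n ω ^ 4 ∂μ)
        + (6 + 4 * (2 * p - 1) / n) * (∫ ω, erwS X n ω ^ 2 ∂μ) + 1 := by
  have hc := erw_cross hE n 1 hn
  have hc3 := erw_cross hE n 3 hn
  obtain ⟨_, _, hX, hm, _⟩ := hE
  have : ∀ ω, erwS X (n + 1) ω ^ 4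
      = erwS X n ω ^ 4 + 4 * (erwS X n ω ^ 3 * X (n + 1) ω) + 6 * erwS X n ω ^ 2
        + 4 * (erwS X n ω ^ 1 * X (n + 1) ω) + 1 := by
    intro ω
    rw [erw_succ]
    rcases hX (n + 1) (by omega) ω with h | h <;> rw [h] <;> ring
  simp_rw [this]
  have i4 := erw_int_pow (μ := μ) hX hm n 4
  have i3 := (erw_int_pow_mul (μ := μ) hX hm n 3).const_mul 4
  have i2 := (erw_int_pow (μ := μ) hX hm n 2).const_mul 6
  have i1 := (erw_int_pow_mul (μ := μ) hX hm n 1).const_mul 4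
  have j3 := i4.add i3
  have j2 := j3.add i2
  have j1 := j2.add i1
  rw [integral_add, integral_add, integral_add, integral_add,
    integral_const_mul, integral_const_mul, integral_const_mul, hc, hc3]
  · simp; ring
  · exact i4
  · exact i3
  · exact j3
  · exact i2
  · exact j2
  · exact i1
  · exact j1
  · exact integrable_const _

lemma erw_sq_bound {m0 : MeasurableSpace Ω} {μ : Measure Ω} [IsProbabilityMeasure μ]
    {ℱ : Filtration ℕ m0} {X : ℕ → Ω → ℝ} {p : ℝ} (hE : IsERW μ ℱ X p) (hp' : p < 3 / 4) :
    ∃ C : ℝ, 0 ≤ C ∧ ∀ n : ℕ, 1 ≤ n → ∫ ω, erwS X n ω ^ 2 ∂μ ≤ C * n := by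
  have hX := hE.2.2.1
  have hp0 := hE.1
  have hsmall : ∀ n : ℕ, ∫ ω, erwS X n ω ^ 2 ∂μ ≤ (n : ℝ) ^ 2 := by
    intro n
    refine (integral_mono_of_nonneg (ae_of_all _ fun ω => by positivity)
      (integrable_const ((n : ℝ) ^ 2)) (ae_of_all _ fun ω => ?_)).trans (by simp)
    exact sq_le_sq' (by linarith [(abs_le.1 (erw_abs_le hX n ω)).1]) (abs_le.1 (erw_abs_le hX n ω)).2
  set C : ℝ := max 2 (1 / (3 - 4 * p)) with hC
  have hC2 : 2 ≤ C := le_max_left _ _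
  have hC3 : 1 ≤ C * (3 - 4 * p) := by
    have : 1 / (3 - 4 * p) ≤ C := le_max_right _ _
    rwa [div_le_iff₀ (by linarith)] at this
  refine ⟨C, by linarith, fun n hn => ?_⟩
  rcases Nat.lt_or_ge n 2 with h | h
  · obtain rfl : n = 1 := by omega
    have := hsmall 1
    norm_num at this ⊢
    linarith
  induction n, h using Nat.le_induction with
  | base => have := hsmall 2; norm_num at this ⊢; linarith
  | succ n h2 ih =>
    have ih := ih (by omega)
    rw [erw_sq_rec hE n (by omega)]
    have hn2 : (2 : ℝ) ≤ n := by exact_mod_cast h2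
    have hpos : 0 ≤ 1 + 2 * (2 * p - 1) / (n : ℝ) := by
      rw [← sub_le_iff_le_add', zero_sub, le_div_iff₀ (by linarith)]
      linarith
    have := mul_le_mul_of_nonneg_left ih hpos
    have e : (1 + 2 * (2 * p - 1) / (n : ℝ)) * (C * n) = C * n + 2 * (2 * p - 1) * C := by
      field_simp
    push_cast
    nlinarith

lemma erw_four_bound {m0 : MeasurableSpace Ω} {μ : Measure Ω} [IsProbabilityMeasure μ]
    {ℱ : Filtration ℕ m0} {X : ℕ → Ω → ℝ} {p : ℝ} (hE : IsERW μ ℱ X p) (hp' : p < 3 / 4) :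
    ∃ D : ℝ, 0 ≤ D ∧ ∀ n : ℕ, 1 ≤ n → ∫ ω, erwS X n ω ^ 4 ∂μ ≤ D * (n : ℝ) ^ 2 := by
  obtain ⟨C, hC0, hC⟩ := erw_sq_bound hE hp'
  have hX := hE.2.2.1
  have hp0 := hE.1
  have hsmall : ∀ n : ℕ, ∫ ω, erwS X n ω ^ 4 ∂μ ≤ (n : ℝ) ^ 4 := by
    intro n
    refine (integral_mono_of_nonneg (ae_of_all _ fun ω => by positivity)
      (integrable_const ((n : ℝ) ^ 4)) (ae_of_all _ fun ω => ?_)).trans (by simp)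
    have := pow_le_pow_left₀ (abs_nonneg _) (erw_abs_le hX n ω) 4
    rwa [Even.pow_abs (by decide)] at this
  set D : ℝ := max 16 ((8 * C + 1) / (6 - 8 * p)) with hD
  have hD2 : 16 ≤ D := le_max_left _ _
  have hD3 : 8 * C + 1 ≤ D * (6 - 8 * p) := by
    have : (8 * C + 1) / (6 - 8 * p) ≤ D := le_max_right _ _
    rwa [div_le_iff₀ (by linarith)] at this
  have hbase : ∀ n : ℕ, n ≤ 4 → ∫ ω, erwS X n ω ^ 4 ∂μ ≤ D * (n : ℝ) ^ 2 := by
    intro n hn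
    refine (hsmall n).trans ?_
    have h4 : (n : ℝ) ≤ 4 := by exact_mod_cast hn
    have h0 : (0 : ℝ) ≤ n := by positivity
    have : (n : ℝ) ^ 2 ≤ D := by nlinarith
    calc (n : ℝ) ^ 4 = (n : ℝ) ^ 2 * (n : ℝ) ^ 2 := by ring
      _ ≤ _ := by gcongr
  refine ⟨D, by linarith, fun n hn => ?_⟩
  rcases Nat.lt_or_ge n 4 with h | h
  · exact hbase n h.le
  induction n, h using Nat.le_induction with
  | base => exact hbase 4 le_rfl
  | succ n h2 ih =>
    have ih := ih (by omega)
    rw [erw_four_rec hE n (by omega)]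
    have hn2 : (4 : ℝ) ≤ n := by exact_mod_cast h2
    have hpos : 0 ≤ 1 + 4 * (2 * p - 1) / (n : ℝ) := by
      rw [← sub_le_iff_le_add', zero_sub, le_div_iff₀ (by linarith)]
      linarith
    have h1 := mul_le_mul_of_nonneg_left ih hpos
    have e : (1 + 4 * (2 * p - 1) / (n : ℝ)) * (D * (n : ℝ) ^ 2)
        = D * (n : ℝ) ^ 2 + 4 * (2 * p - 1) * D * n := by
      field_simp
    have h8 : 6 + 4 * (2 * p - 1) / (n : ℝ) ≤ 8 := by
      rw [← le_sub_iff_add_le', div_le_iff₀ (by linarith)]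
      linarith
    have hI : 0 ≤ ∫ ω, erwS X n ω ^ 2 ∂μ := integral_nonneg fun ω => by positivity
    have h3 := mul_le_mul_of_nonneg_right h8 hI
    have h4 := hC n (by omega)
    have h5 := mul_le_mul_of_nonneg_right hD3 (by linarith : (0 : ℝ) ≤ n)
    push_cast
    nlinarith

lemma erw_summable {m0 : MeasurableSpace Ω} {μ : Measure Ω} [IsProbabilityMeasure μ]
    {ℱ : Filtration ℕ m0} {X : ℕ → Ω → ℝ} {p : ℝ} (hE : IsERW μ ℱ X p) (hp' : p < 3 / 4) :
    ∀ᵐ ω ∂μ, Summable fun n : ℕ => |erwS X n ω / n| ^ 3 := by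
  obtain ⟨C, hC0, hC⟩ := erw_sq_bound hE hp'
  obtain ⟨D, hD0, hD⟩ := erw_four_bound hE hp'
  have hX := hE.2.2.1
  have hm := hE.2.2.2.1
  have hmeas : ∀ n : ℕ, Measurable fun ω => |erwS X n ω / n| ^ 3 := by
    intro n
    have := (erw_meas hm n).mono (ℱ.le n) le_rfl
    exact (Measurable.abs (this.div_const _)).pow_const 3
  have hbd : ∀ n : ℕ, ∫ ω, |erwS X n ω / n| ^ 3 ∂μ ≤ (C + D) * (n : ℝ) ^ (-(3/2) : ℝ) := by
    intro n
    rcases Nat.eq_zero_or_pos n with rfl | hn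
    · simp only [CharP.cast_eq_zero, div_zero, abs_zero]
      simp
    have hn0 : (0 : ℝ) < n := by exact_mod_cast hn
    set r : ℝ := (n : ℝ) ^ (-(1/2) : ℝ) with hr
    have hr0 : 0 < r := Real.rpow_pos_of_pos hn0 _
    have hr2 : r ^ 2 * n = 1 := by
      rw [hr, ← Real.rpow_natCast, ← Real.rpow_mul hn0.le]
      norm_num [Real.rpow_neg_one]
      field_simp
    have hr3 : (n : ℝ) ^ (-(3/2) : ℝ) = r ^ 3 := by
      rw [hr, ← Real.rpow_natCast, ← Real.rpow_mul hn0.le]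
      norm_num
    rw [hr3]
    have hpt : ∀ ω, |erwS X n ω / n| ^ 3
        ≤ r ^ 5 * erwS X n ω ^ 2 + r ^ 7 * erwS X n ω ^ 4 := by
      intro ω
      have e1 : |erwS X n ω / n| = r ^ 2 * |erwS X n ω| := by
        rw [abs_div, abs_of_pos hn0, div_eq_iff hn0.ne']
        linear_combination (-|erwS X n ω|) * hr2
      rw [e1]
      have e2 : erwS X n ω ^ 2 = |erwS X n ω| ^ 2 := (sq_abs _).symm
      have e4 : erwS X n ω ^ 4 = |erwS X n ω| ^ 4 := (Even.pow_abs (by decide) _).symm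
      rw [e2, e4]
      set s := |erwS X n ω|
      have : r ^ 5 * s ^ 2 + r ^ 7 * s ^ 4 - (r ^ 2 * s) ^ 3
          = r ^ 5 * s ^ 2 * ((1 - r * s / 2) ^ 2 + 3 / 4 * (r * s) ^ 2) := by ring
      have : 0 ≤ r ^ 5 * s ^ 2 * ((1 - r * s / 2) ^ 2 + 3 / 4 * (r * s) ^ 2) := by positivity
      linarith
    have i2 := (erw_int_pow (μ := μ) hX hm n 2).const_mul (r ^ 5)
    have i4 := (erw_int_pow (μ := μ) hX hm n 4).const_mul (r ^ 7)
    have := integral_mono_of_nonneg (μ := μ) (ae_of_all _ fun ω => by positivity) (i2.add i4)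
      (ae_of_all _ hpt)
    refine this.trans ?_
    simp only [Pi.add_apply]
    rw [integral_add i2 i4, integral_const_mul, integral_const_mul]
    have a1 := mul_le_mul_of_nonneg_left (hC n hn) (by positivity : 0 ≤ r ^ 5)
    have a2 := mul_le_mul_of_nonneg_left (hD n hn) (by positivity : 0 ≤ r ^ 7)
    have b1 : r ^ 5 * (C * n) = C * r ^ 3 := by linear_combination (C * r ^ 3) * hr2
    have b2 : r ^ 7 * (D * (n : ℝ) ^ 2) = D * r ^ 3 := by
      linear_combination (D * r ^ 3 * (r ^ 2 * n + 1)) * hr2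
    linarith
  have hsum : Summable fun n : ℕ => (C + D) * (n : ℝ) ^ (-(3/2) : ℝ) :=
    (Real.summable_nat_rpow.2 (by norm_num)).mul_left _
  have hint : ∀ n : ℕ, Integrable (fun ω => |erwS X n ω / n| ^ 3) μ := by
    intro n
    refine Integrable.of_bound (C := 1) (hmeas n).aestronglyMeasurable (ae_of_all _ fun ω => ?_)
    rw [Real.norm_of_nonneg (by positivity)]
    refine pow_le_one₀ (abs_nonneg _) ?_
    rw [abs_div, Nat.abs_cast]
    exact div_le_one_of_le₀ (erw_abs_le hX n ω) (by positivity)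
  have hlin : ∫⁻ ω, ∑' n : ℕ, ENNReal.ofReal (|erwS X n ω / n| ^ 3) ∂μ ≠ ∞ := by
    rw [lintegral_tsum fun n => ((hmeas n).ennreal_ofReal).aemeasurable]
    have : ∀ n : ℕ, ∫⁻ ω, ENNReal.ofReal (|erwS X n ω / n| ^ 3) ∂μ
        ≤ ENNReal.ofReal ((C + D) * (n : ℝ) ^ (-(3/2) : ℝ)) := by
      intro n
      rw [← ofReal_integral_eq_lintegral_ofReal (hint n) (ae_of_all _ fun ω => by positivity)]
      exact ENNReal.ofReal_le_ofReal (hbd n)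
    refine ne_top_of_le_ne_top ?_ (ENNReal.tsum_le_tsum this)
    exact hsum.tsum_ofReal_ne_top
  have hmt : AEMeasurable (fun ω => ∑' n : ℕ, ENNReal.ofReal (|erwS X n ω / n| ^ 3)) μ :=
    AEMeasurable.tsum fun n => ((hmeas n).ennreal_ofReal).aemeasurable
  filter_upwards [ae_lt_top' hmt hlin] with ω hω
  have := ENNReal.summable_toReal hω.ne
  refine this.congr fun n => ?_
  rw [ENNReal.toReal_ofReal (by positivity)]

/-- Third order expansion of one term of the log-likelihood. -/
lemma erw_term {a d Z x : ℝ} (ha : |a| < 1) (hZ : |Z| ≤ 1) (hx : x = 1 ∨ x = -1)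
    (hd : |d| ≤ (1 - |a|) / 4) :
    |((1 + x) / 2 * Real.log ((1 + (a + 2 * d) * Z) / 2) +
        (1 - x) / 2 * Real.log ((1 - (a + 2 * d) * Z) / 2)) -
      ((1 + x) / 2 * Real.log ((1 + a * Z) / 2) + (1 - x) / 2 * Real.log ((1 - a * Z) / 2)) -
      (2 * d * (Z * (x - a * Z) / (1 - a ^ 2 * Z ^ 2)) - 2 * d ^ 2 * Z ^ 2)|
      ≤ (6 * d ^ 2 / (1 - |a|) ^ 2 + 16 * |d| ^ 3 / (1 - |a|) ^ 3) * |Z| ^ 3 := by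
  -- reduce to `w = x Z`
  obtain ⟨w, hw, hZw, e1, e2, e3⟩ : ∃ w : ℝ, |w| = |Z| ∧ Z ^ 2 = w ^ 2 ∧
      (∀ b : ℝ, (1 + x) / 2 * Real.log ((1 + b * Z) / 2) +
        (1 - x) / 2 * Real.log ((1 - b * Z) / 2) = Real.log ((1 + b * w) / 2)) ∧
      (Z * (x - a * Z) = w * (1 - a * w)) ∧ True := by
    rcases hx with rfl | rfl
    · exact ⟨Z, rfl, rfl, fun b => by norm_num, rfl, trivial⟩
    · exact ⟨-Z, abs_neg _, by ring, fun b => by norm_num; ring_nf, by ring, trivial⟩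
  rw [e1, e1, e2, hZw, ← hw]
  rw [← hw] at hZ
  have haw : |a * w| ≤ |a| := by
    rw [abs_mul]; exact mul_le_of_le_one_right (abs_nonneg _) hZ
  have hc : 0 < 1 - |a| := by linarith
  set c := 1 - |a| with hcdef
  have hpos : c ≤ 1 + a * w := by linarith [(abs_le.1 haw).1]
  have hpos' : c ≤ 1 - a * w := by linarith [(abs_le.1 haw).2]
  have hq : 0 < 1 + a * w := by linarith
  have hq' : 0 < 1 - a * w := by linarith
  set q := 1 + a * w with hqdef
  set y := 2 * d * w / q with hy
  have hyabs : |y| ≤ 2 * |d| * |w| / c := by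
    rw [hy, abs_div, abs_mul, abs_mul, abs_of_pos hq, abs_two]
    gcongr
  have hyhalf : |y| ≤ 1 / 2 := by
    refine hyabs.trans ?_
    rw [div_le_iff₀ hc]
    nlinarith [abs_nonneg d, abs_nonneg w]
  have hlog : Real.log ((1 + (a + 2 * d) * w) / 2) - Real.log (q / 2) = Real.log (1 + y) := by
    have h1y : 0 < 1 + y := by linarith [(abs_le.1 hyhalf).1]
    have : (1 + (a + 2 * d) * w) / 2 = (q / 2) * (1 + y) := by
      rw [hy]; field_simp; rw [hqdef]; ring
    rw [this, Real.log_mul (by positivity) h1y.ne']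
    ring
  have hfrac : w * (1 - a * w) / (1 - a ^ 2 * w ^ 2) = w / q := by
    have : 1 - a ^ 2 * w ^ 2 = q * (1 - a * w) := by rw [hqdef]; ring
    rw [this, mul_div_mul_right _ _ hq'.ne']
  have hfrac2 : 2 * d * (w / q) = y := by rw [hy]; ring
  rw [hlog, hfrac, hfrac2]
  have hT := Real.abs_log_sub_add_sum_range_le (x := -y) (by rw [abs_neg]; linarith) 2
  simp only [Finset.sum_range_succ, Finset.sum_range_zero, abs_neg, sub_neg_eq_add] at hT
  norm_num at hT
  have hT2 : |y| ^ 3 / (1 - |y|) ≤ 2 * |y| ^ 3 := by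
    rw [div_le_iff₀ (by linarith)]
    nlinarith [pow_nonneg (abs_nonneg y) 3]
  have hy3 : 2 * |y| ^ 3 ≤ 16 * |d| ^ 3 / c ^ 3 * |w| ^ 3 := by
    have := pow_le_pow_left₀ (abs_nonneg y) hyabs 3
    have e : (2 * |d| * |w| / c) ^ 3 = 8 * |d| ^ 3 / c ^ 3 * |w| ^ 3 := by
      field_simp; ring
    rw [e] at this
    calc 2 * |y| ^ 3 ≤ 2 * (8 * |d| ^ 3 / c ^ 3 * |w| ^ 3) := by linarith
      _ = _ := by ring
  have hsecond : |2 * d ^ 2 * w ^ 2 - y ^ 2 / 2| ≤ 6 * d ^ 2 / c ^ 2 * |w| ^ 3 := by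
    have e : 2 * d ^ 2 * w ^ 2 - y ^ 2 / 2 = 2 * d ^ 2 * w ^ 2 * (a * w * (2 + a * w)) / q ^ 2 := by
      rw [hy]; field_simp; rw [hqdef]; ring
    rw [e, abs_div, abs_of_pos (by positivity : 0 < q ^ 2)]
    have h1 : |2 * d ^ 2 * w ^ 2 * (a * w * (2 + a * w))| ≤ 6 * d ^ 2 * |w| ^ 3 := by
      rw [abs_mul, abs_mul (a * w), abs_of_nonneg (by positivity : 0 ≤ 2 * d ^ 2 * w ^ 2)]
      have : |2 + a * w| ≤ 3 := by
        rw [abs_le]; constructor <;> linarith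
      have h2 : |a * w| ≤ |w| := by
        rw [abs_mul]; exact mul_le_of_le_one_left (abs_nonneg _) ha.le
      calc 2 * d ^ 2 * w ^ 2 * (|a * w| * |2 + a * w|)
          ≤ 2 * d ^ 2 * w ^ 2 * (|w| * 3) := by gcongr
        _ = 6 * d ^ 2 * |w| ^ 3 := by rw [← sq_abs w]; ring
    calc _ ≤ 6 * d ^ 2 * |w| ^ 3 / c ^ 2 := by gcongr
      _ = _ := by ring
  have hsplit : Real.log (1 + y) - (y - 2 * d ^ 2 * w ^ 2)
      = (-y + y ^ 2 / 2 + Real.log (1 + y)) + (2 * d ^ 2 * w ^ 2 - y ^ 2 / 2) := by ring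
  rw [hsplit]
  refine (abs_add_le _ _).trans ?_
  rw [add_mul]
  linarith

/-- Local asymptotic normality in the diffusive regime `0 < p < 3/4`: almost surely,
`ℓ_n(p + h_n (log n)^{-1/2}) - ℓ_n(p) = h_n Δ_n(p) - (h_n²/2) V_n / log n + o(1)`,
where `Δ_n(p) = 2 P_n / √(log n)`. -/
theorem erw_lan_diffusive
    {m0 : MeasurableSpace Ω} (μ : Measure Ω) [IsProbabilityMeasure μ]
    (ℱ : Filtration ℕ m0) (X : ℕ → Ω → ℝ) (p : ℝ)
    (hERW : IsERW μ ℱ X p) (hp : 0 < p) (hp' : p < 3 / 4)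
    (hn : ℕ → ℝ) (h : ℝ) (hconv : Tendsto hn atTop (𝓝 h)) :
    ∀ᵐ ω ∂μ, Tendsto (fun n =>
        (erwLogLik X (p + hn n / Real.sqrt (Real.log n)) n ω - erwLogLik X p n ω) -
          (hn n * (2 * erwP X (2 * p - 1) n ω / Real.sqrt (Real.log n)) -
            hn n ^ 2 / 2 * (erwV X n ω / Real.log n)))
      atTop (𝓝 0) := by
  obtain ⟨_, _, hX, _, _⟩ := id hERW
  filter_upwards [erw_summable hERW hp'] with ω hω
  set a := 2 * p - 1 with ha
  have ha1 : |a| < 1 := by rw [abs_lt]; constructor <;> linarith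
  have hc : 0 < 1 - |a| := by linarith
  set T := ∑' n : ℕ, |erwS X n ω / n| ^ 3 with hT
  set d : ℕ → ℝ := fun n => hn n / Real.sqrt (Real.log n) with hd
  have hlogt : Tendsto (fun n : ℕ => Real.sqrt (Real.log n)) atTop atTop :=
    Real.tendsto_sqrt_atTop.comp (Real.tendsto_log_atTop.comp tendsto_natCast_atTop_atTop)
  have hd0 : Tendsto d atTop (𝓝 0) := hconv.div_atTop hlogt
  have hd0' : Tendsto (fun n => |d n|) atTop (𝓝 0) := by simpa using hd0.abs
  have hbound : Tendsto (fun n => (6 * d n ^ 2 / (1 - |a|) ^ 2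
      + 16 * |d n| ^ 3 / (1 - |a|) ^ 3) * T) atTop (𝓝 0) := by
    have := ((((hd0.pow 2).const_mul 6).div_const ((1 - |a|) ^ 2)).add
      (((hd0'.pow 3).const_mul 16).div_const ((1 - |a|) ^ 3))).mul_const T
    simpa using this
  refine squeeze_zero_norm' ?_ hbound
  have hev : ∀ᶠ n in atTop, |d n| ≤ (1 - |a|) / 4 := by
    filter_upwards [hd0'.eventually (gt_mem_nhds (by linarith : (0 : ℝ) < (1 - |a|) / 4))] with n h
    exact h.le
  filter_upwards [hev, eventually_ge_atTop 1] with n hdn hn1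
  have hlog0 : 0 ≤ Real.log n := Real.log_natCast_nonneg n
  have hd2 : d n ^ 2 = hn n ^ 2 / Real.log n := by
    simp only [hd]; rw [div_pow, Real.sq_sqrt hlog0]
  have hdd : hn n / Real.sqrt (Real.log n) = d n := rfl
  have hmain : (erwLogLik X (p + hn n / Real.sqrt (Real.log n)) n ω - erwLogLik X p n ω) -
          (hn n * (2 * erwP X a n ω / Real.sqrt (Real.log n)) -
            hn n ^ 2 / 2 * (erwV X n ω / Real.log n))
      = ∑ k ∈ Finset.Icc 1 (n - 1),
        (((1 + X (k + 1) ω) / 2 * Real.log ((1 + (a + 2 * d n) * (erwS X k ω / k)) / 2) +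
        (1 - X (k + 1) ω) / 2 * Real.log ((1 - (a + 2 * d n) * (erwS X k ω / k)) / 2)) -
      ((1 + X (k + 1) ω) / 2 * Real.log ((1 + a * (erwS X k ω / k)) / 2)
        + (1 - X (k + 1) ω) / 2 * Real.log ((1 - a * (erwS X k ω / k)) / 2)) -
      (2 * d n * ((erwS X k ω / k) * (X (k + 1) ω - a * (erwS X k ω / k))
        / (1 - a ^ 2 * (erwS X k ω / k) ^ 2)) - 2 * d n ^ 2 * (erwS X k ω / k) ^ 2)) := by
    rw [Finset.sum_sub_distrib, Finset.sum_sub_distrib, Finset.sum_sub_distrib,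
      ← Finset.mul_sum, ← Finset.mul_sum]
    have t1 : hn n * (2 * erwP X a n ω / Real.sqrt (Real.log n)) = 2 * d n * erwP X a n ω := by
      rw [← hdd]; ring
    have t2 : hn n ^ 2 / 2 * (erwV X n ω / Real.log n)
        = 2 * d n ^ 2 * ∑ k ∈ Finset.Icc 1 (n - 1), (erwS X k ω / k) ^ 2 := by
      rw [hd2]; unfold erwV; ring
    have t3 : 2 * (p + d n) - 1 = a + 2 * d n := by rw [ha]; ring
    rw [t1, t2, hdd]
    unfold erwLogLik erwP
    rw [t3]
  rw [hmain, Real.norm_eq_abs]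
  refine (Finset.abs_sum_le_sum_abs _ _).trans ?_
  refine (Finset.sum_le_sum fun k hk => erw_term ha1 ?_ (hX (k + 1) (by omega) ω) hdn).trans ?_
  · rw [abs_div, Nat.abs_cast]
    exact div_le_one_of_le₀ (erw_abs_le hX k ω) (by positivity)
  · rw [← Finset.mul_sum]
    refine mul_le_mul_of_nonneg_left ?_ (by positivity)
    exact hω.sum_le_tsum _ fun k _ => by positivity
end
end
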